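/- arXiv:1907.08913 — 2 statements merged into one kernel-verified Lean document; each statement's English description precedes it below -/
import Mathlib

section
/- With the carrier S and operators L_i as in the context, for scalars f_{ij}^k ∈ K (i,j,k ∈ I) the supercommutation relations [L_i, L_j] = ℏ Σ_{k∈I} f_{ij}^k L_k hold for all i,j ∈ I if and only if all of the following hold for all i,j ∈ I and a,b ∈ Ĩ: (A) A_{jia} = (−1)^{|i||j|} A_{ija}; (f) f_{ij}^k = (−1)^{|i||j|} B_{ij}^k − B_{ji}^k for all k ∈ I, and (−1)^{|i||j|} B_{ij}^0 = B_{ji}^0; (BA) Σ_{c∈Ĩ} [B_{ia}^c A_{jcb} + (−1)^{|a||b|} B_{ib}^c A_{jca}] + (−1)^{|i||j|} Σ_{k∈I} B_{ij}^k A_{kab} equals (−1)^{|i||j|} times the same expression with i and j exchanged; (BB−CA) Σ_{c∈Ĩ} [B_{ia}^c B_{jc}^b + (−1)^{|a||b|} C_i^{bc} A_{jca}] + (−1)^{|i||j|} Σ_{k∈I} B_{ij}^k B_{ka}^b equals (−1)^{|i||j|} times the same expression with i and j exchanged; (CB) Σ_{c∈Ĩ} [C_i^{ac} B_{jc}^b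 + (−1)^{|a||b|} C_i^{bc} B_{jc}^a] + (−1)^{|i||j|} Σ_{k∈I} B_{ij}^k C_k^{ab} equals (−1)^{|i||j|} times the same expression with i and j exchanged; (CA−BD) (1/2) Σ_{a,b∈Ĩ} C_i^{ba} A_{jab} + (−1)^{|i||j|} Σ_{k∈I} B_{ij}^k D_k equals (−1)^{|i||j|} times the same expression with i and j exchanged. -/
/-!
Statement 1: for quadratic differential operators
`L_i = ℏ∂_i − (1/2)Σ A_{iab} x̂^a x̂^b − ℏ Σ B_{ia}^b x̂^a ∂_b − (ℏ²/2) Σ C_i^{ab} ∂_a ∂_b − ℏ D_i`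
on `S = K[ℏ][x^a : |a|=0] ⊗ Λ(x^a : |a|=1)`, the supercommutation relations
`[L_i, L_j] = ℏ Σ_k f_{ij}^k L_k` hold iff the tensors satisfy the constraints
(A), (f), (BA), (BB−CA), (CB), (CA−BD) of a quadratic super quantum Airy structure.
-/

set_option synthInstance.maxHeartbeats 1000000
set_option maxHeartbeats 1000000

noncomputable section
open TensorProduct

/-- The sign `(−1)^e` for `e ∈ ℤ/2`. -/
def sg (K : Type) [Field K] (e : ZMod 2) : K := if e = 0 then 1 else -1

lemma zmod2_eq_one {x : ZMod 2} (h : ¬ x = 0) : x = 1 := by revert x h; decide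

variable (K : Type) [Field K] [CharZero K]
variable (d : ℕ) (p : Fin (d + 1) → ZMod 2)

/-- `R = K[ℏ]`. -/
abbrev R := Polynomial K
/-- `ℏ ∈ R`. -/
def hb : R K := Polynomial.X
/-- A scalar `c : K` viewed in `R`. -/
def cs (c : K) : R K := Polynomial.C c
/-- The sign `(−1)^e` viewed in `R`. -/
def sgR (e : ZMod 2) : R K := if e = 0 then 1 else -1

/-- The even part: polynomials in the even variables `x^a`, `|a| = 0`. -/
abbrev Pev := MvPolynomial {a : Fin (d + 1) // p a = 0} (R K)
/-- The odd part: the exterior algebra on the odd variables `x^a`, `|a| = 1`. -/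
abbrev Podd := ExteriorAlgebra (R K) ({a : Fin (d + 1) // p a = 1} →₀ R K)
/-- The full carrier `S = P ⊗_R Λ`. -/
abbrev SuperSpace := Pev K d p ⊗[R K] Podd K d p

/-- Left multiplication by the (even or odd) variable `x^a`. -/
def xop (a : Fin (d + 1)) : SuperSpace K d p → SuperSpace K d p :=
  if h : p a = 0 then
    LinearMap.rTensor (Podd K d p) (LinearMap.mulLeft (R K) (MvPolynomial.X ⟨a, h⟩))
  else
    LinearMap.lTensor (Pev K d p)
      (LinearMap.mulLeft (R K)
        (ExteriorAlgebra.ι (R K) (Finsupp.single ⟨a, zmod2_eq_one h⟩ 1)))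

/-- The (even or odd) partial derivative `∂_a`: for even `a` the partial derivative with
respect to `x^a`, for odd `a` the interior product with the dual basis vector. -/
def dop (a : Fin (d + 1)) : SuperSpace K d p → SuperSpace K d p :=
  if h : p a = 0 then
    LinearMap.rTensor (Podd K d p) (MvPolynomial.pderiv ⟨a, h⟩).toLinearMap
  else
    LinearMap.lTensor (Pev K d p)
      (CliffordAlgebra.contractLeft (Finsupp.lapply ⟨a, zmod2_eq_one h⟩))

/-- The quadratic differential operator
`L_i = ℏ∂_i − (1/2) Σ_{a,b} A_{iab} x̂^a x̂^b − ℏ Σ_{a,b} B_{ia}^b x̂^a ∂_b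
       − (ℏ²/2) Σ_{a,b} C_i^{ab} ∂_a ∂_b − ℏ D_i`. -/
def Lop (A B C : Fin (d + 1) → Fin (d + 1) → Fin (d + 1) → K) (D : Fin (d + 1) → K)
    (i : Fin (d + 1)) : SuperSpace K d p → SuperSpace K d p := fun v =>
  hb K • dop K d p i v
    - ∑ a : Fin (d + 1), ∑ b : Fin (d + 1),
        cs K ((2 : K)⁻¹ * A i a b) • xop K d p a (xop K d p b v)
    - ∑ a : Fin (d + 1), ∑ b : Fin (d + 1),
        (hb K * cs K (B i a b)) • xop K d p a (dop K d p b v)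
    - ∑ a : Fin (d + 1), ∑ b : Fin (d + 1),
        (cs K ((2 : K)⁻¹ * C i a b) * hb K ^ 2) • dop K d p a (dop K d p b v)
    - (hb K * cs K (D i)) • v

section Constraints

variable (A B C : Fin (d + 1) → Fin (d + 1) → Fin (d + 1) → K) (D : Fin (d + 1) → K)

/-- Left-hand side of constraint (BA); the `k`-sum runs over `I = {1, …, d}`. -/
def lhsBA (i j a b : Fin (d + 1)) : K :=
  (∑ c : Fin (d + 1), (B i a c * A j c b + sg K (p a * p b) * (B i b c * A j c a)))
    + sg K (p i * p j) *
        ∑ k : Fin (d + 1), (if k = 0 then 0 else B i j k * A k a b)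

/-- Left-hand side of constraint (BB−CA). -/
def lhsBBCA (i j a b : Fin (d + 1)) : K :=
  (∑ c : Fin (d + 1), (B i a c * B j c b + sg K (p a * p b) * (C i b c * A j c a)))
    + sg K (p i * p j) *
        ∑ k : Fin (d + 1), (if k = 0 then 0 else B i j k * B k a b)

/-- Left-hand side of constraint (CB). -/
def lhsCB (i j a b : Fin (d + 1)) : K :=
  (∑ c : Fin (d + 1), (C i a c * B j c b + sg K (p a * p b) * (C i b c * B j c a)))
    + sg K (p i * p j) *
        ∑ k : Fin (d + 1), (if k = 0 then 0 else B i j k * C k a b)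

/-- Left-hand side of constraint (CA−BD). -/
def lhsCABD (i j : Fin (d + 1)) : K :=
  (2 : K)⁻¹ * (∑ a : Fin (d + 1), ∑ b : Fin (d + 1), C i b a * A j a b)
    + sg K (p i * p j) * ∑ k : Fin (d + 1), (if k = 0 then 0 else B i j k * D k)

end Constraints

/-!
Put `X a = x̂^a` and `Y a = ℏ ∂_a`. The only algebraic input is that these satisfy the super Weyl
relations, by which every supercommutator of quadratic monomials is again a quadratic element in
normal order (variables to the left of derivations) plus a constant. The quadratic and constant
terms of `[L_i, L_j]` come from contracting `Y`s of `L_i` with `X`s of `L_j`, minus the Koszul sign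
times the same with `i` and `j` exchanged, and (f) splits `∑ f_{ij}^k L_k` in the same way. This is
where the exchange symmetry of the structure equations comes from.

A normally ordered element vanishes only if its coefficients do: multiplying it by `Y`s on the left
and by `X`s on the right and taking the vacuum expectation value (apply to `1`, then set all
variables to zero) reads off each coefficient up to a power of `ℏ` and a factor `2`. So the bracket
relation holds if and only if all coefficients of `[L_i, L_j] - ℏ ∑ f_{ij}^k L_k` vanish. The
coefficients of `X` give (A), those of `Y` give (f), and the quadratic and constant terms give the
other four equations.

The index `0` carries a variable but no operator; it is given the zero coefficient tensors and the
structure constant `f_{ij}^0 = 0`, for which (f) becomes the condition on `B_{ij}^0`.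
-/

section Signs

/-- The Koszul sign `(-1)^e` of a parity `e`, in an arbitrary commutative ring. -/
def koszulSign (k : Type*) [CommRing k] (e : ZMod 2) : k := if e = 0 then 1 else -1

variable {k : Type*} [CommRing k]

@[simp] lemma koszulSign_zero : koszulSign k 0 = 1 := if_pos rfl

@[simp] lemma koszulSign_one : koszulSign k 1 = -1 := if_neg one_ne_zero

lemma koszulSign_add (e e' : ZMod 2) :
    koszulSign k (e + e') = koszulSign k e * koszulSign k e' := by
  by_cases he : e = 0
  · simp [he]
  by_cases he' : e' = 0
  · simp [he']
  simp [zmod2_eq_one he, zmod2_eq_one he', CharTwo.add_self_eq_zero]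

@[simp] lemma koszulSign_mul_self (e : ZMod 2) : koszulSign k e * koszulSign k e = 1 := by
  rw [koszulSign]; split_ifs <;> simp

lemma map_koszulSign {l : Type*} [CommRing l] (φ : k →+* l) (e : ZMod 2) :
    φ (koszulSign k e) = koszulSign l e := by
  rw [koszulSign, koszulSign]; split_ifs <;> simp

end Signs

section SuperBracket

variable {k E : Type*} [CommRing k] [Ring E] [Algebra k E]

/-- The bracket `P Q - s Q P`. It is the supercommutator when `s` is the Koszul sign of the
product of the parities of `P` and `Q`; taking the sign instead of the parities as the parameter
makes it bilinear on the whole algebra. -/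
def superBracket (s : k) : E →ₗ[k] E →ₗ[k] E :=
  LinearMap.mul k E - s • (LinearMap.mul k E).flip

lemma superBracket_apply (s : k) (P Q : E) : superBracket s P Q = P * Q - s • (Q * P) := rfl

lemma superBracket_swap {s : k} (hs : s * s = 1) (P Q : E) :
    superBracket s Q P = -(s • superBracket s P Q) := by
  simp only [superBracket_apply]
  linear_combination (norm := module) -hs • (Q * P)

lemma superBracket_mul_left (s t : k) (P Q V : E) :
    superBracket (s * t) (P * Q) V
      = P * superBracket t Q V + t • (superBracket s P V * Q) := by
  simp only [superBracket_apply, mul_sub, sub_mul, mul_smul_comm, smul_mul_assoc, mul_assoc]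
  module

lemma superBracket_mul_right (s t : k) (V P Q : E) :
    superBracket (s * t) V (P * Q)
      = superBracket s V P * Q + s • (P * superBracket t V Q) := by
  simp only [superBracket_apply, mul_sub, sub_mul, mul_smul_comm, smul_mul_assoc, mul_assoc]
  module

lemma superBracket_koszulSign_swap (e e' : ZMod 2) (P Q : E) :
    superBracket (koszulSign k (e' * e)) Q P
      = -(koszulSign k (e * e') • superBracket (koszulSign k (e * e')) P Q) := by
  rw [mul_comm e', superBracket_swap (koszulSign_mul_self _)]

lemma mul_eq_of_superBracket_eq {s : k} {P Q r : E} (h : superBracket s P Q = r) :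
    P * Q = s • (Q * P) + r := by
  rw [← h, superBracket_apply, add_sub_cancel]

end SuperBracket

open Matrix

section SuperMatrices

variable {k ι : Type*} [CommRing k] (p : ι → ZMod 2)

/-- Homogeneity of the coefficient matrix of a quadratic element of parity `e`, where the
generator with index `a` has parity `p a`. -/
def IsHomogeneous (e : ZMod 2) (M : Matrix ι ι k) : Prop := ∀ a b, M a b = 0 ∨ e = p a + p b

/-- The supertranspose `(M b a)` up to the sign of exchanging the generators `a` and `b`: its
fixed points are the coefficient matrices of quadratic forms in supercommuting variables. -/
def superTranspose : Matrix ι ι k →ₗ[k] Matrix ι ι k where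
  toFun M := of fun a b => koszulSign k (p a * p b) * M b a
  map_add' M N := by ext; simp [mul_add]
  map_smul' t M := by ext; simp [mul_left_comm]

lemma superTranspose_apply (M : Matrix ι ι k) (a b : ι) :
    superTranspose p M a b = koszulSign k (p a * p b) * M b a := rfl

@[simp] lemma superTranspose_superTranspose (M : Matrix ι ι k) :
    superTranspose p (superTranspose p M) = M := by
  ext a b
  rw [superTranspose_apply, superTranspose_apply, ← mul_assoc, mul_comm (p b),
    koszulSign_mul_self, one_mul]

lemma superTranspose_add_superTranspose (M : Matrix ι ι k) :
    superTranspose p (M + superTranspose p M) = M + superTranspose p M := by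
  rw [map_add, superTranspose_superTranspose, add_comm]

variable {p}

lemma isHomogeneous_iff {e : ZMod 2} {M : Matrix ι ι k} :
    IsHomogeneous p e M ↔ ∀ a b, e + p a + p b ≠ 0 → M a b = 0 := by
  simp only [IsHomogeneous, or_iff_not_imp_right, add_assoc, ne_eq, CharTwo.add_eq_zero]

lemma map_superTranspose {l : Type*} [CommRing l] (φ : k →+* l) (M : Matrix ι ι k) :
    (superTranspose p M).map φ = superTranspose p (M.map φ) := by
  ext a b
  simp only [Matrix.map_apply, superTranspose_apply, map_mul, map_koszulSign]

lemma IsHomogeneous.map {l : Type*} [CommRing l] {e : ZMod 2} {M : Matrix ι ι k}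
    (hM : IsHomogeneous p e M) (φ : k →+* l) : IsHomogeneous p e (M.map φ) :=
  fun a b => (hM a b).imp_left fun h => by rw [Matrix.map_apply, h, map_zero]

lemma IsHomogeneous.smul {e : ZMod 2} {M : Matrix ι ι k} (hM : IsHomogeneous p e M) (t : k) :
    IsHomogeneous p e (t • M) :=
  fun a b => (hM a b).imp_left fun h => by rw [Matrix.smul_apply, h, smul_zero]

variable [Fintype ι] [DecidableEq ι]

lemma superTranspose_mul_of_isHomogeneous_right {e : ZMod 2} {M N : Matrix ι ι k}
    (hM : superTranspose p M = M) (hN : IsHomogeneous p e N) :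
    superTranspose p (M * N) = Nᵀ * M * diagonal fun b => koszulSign k (p b * e) := by
  ext a b
  rw [superTranspose_apply, mul_diagonal, mul_apply, mul_apply, Finset.mul_sum, Finset.sum_mul]
  refine Finset.sum_congr rfl fun c _ => ?_
  have hbc : M b c = koszulSign k (p b * p c) * M c b := congrFun₂ hM.symm b c
  rcases hN c a with h | h
  · simp [h]
  · rw [hbc, h, mul_add, koszulSign_add, transpose_apply, mul_comm (p a)]
    ring

lemma superTranspose_mul_of_isHomogeneous_left {e : ZMod 2} {M N : Matrix ι ι k}
    (hM : IsHomogeneous p e M) (hN : superTranspose p N = N) :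
    superTranspose p (M * N) = (diagonal fun a => koszulSign k (e * p a)) * N * Mᵀ := by
  ext a b
  rw [superTranspose_apply, mul_assoc, diagonal_mul, mul_apply, mul_apply, Finset.mul_sum,
    Finset.mul_sum]
  refine Finset.sum_congr rfl fun c _ => ?_
  have hca : N c a = koszulSign k (p c * p a) * N a c := congrFun₂ hN.symm c a
  rcases hM b c with h | h
  · simp [h]
  · rw [hca, h, add_mul, koszulSign_add, transpose_apply, mul_comm (p a)]
    ring

lemma diagonal_koszulSign_mul_mul_diagonal {e' : ZMod 2} {M : Matrix ι ι k}
    (hM : IsHomogeneous p e' M) (e : ZMod 2) :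
    (diagonal fun a => koszulSign k (e * p a)) * M * (diagonal fun b => koszulSign k (e * p b))
      = koszulSign k (e * e') • M := by
  ext a b
  rw [mul_diagonal, diagonal_mul, Matrix.smul_apply, smul_eq_mul]
  rcases hM a b with h | h
  · simp [h]
  · rw [h, mul_add, koszulSign_add]
    ring

end SuperMatrices

section QuadraticForms

variable {k E ι : Type*} [CommRing k] [Ring E] [Algebra k E] [Fintype ι]

/-- The element `∑ a, ∑ b, M a b • (Y a * Z b)` of an algebra, as a linear function of `M`. -/
def quadratic (Y Z : ι → E) : Matrix ι ι k →ₗ[k] E where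
  toFun M := ∑ a, ∑ b, M a b • (Y a * Z b)
  map_add' M N := by simp only [Matrix.add_apply, add_smul, Finset.sum_add_distrib]
  map_smul' t M := by
    simp only [Matrix.smul_apply, smul_assoc, Finset.smul_sum, RingHom.id_apply]

lemma quadratic_apply (Y Z : ι → E) (M : Matrix ι ι k) :
    quadratic Y Z M = ∑ a, ∑ b, M a b • (Y a * Z b) := rfl

@[simp] lemma quadratic_zero_left (Z : ι → E) (M : Matrix ι ι k) : quadratic 0 Z M = 0 := by
  simp [quadratic_apply]

@[simp] lemma quadratic_zero_right (Y : ι → E) (M : Matrix ι ι k) : quadratic Y 0 M = 0 := by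
  simp [quadratic_apply]

lemma quadratic_linear_left (Y Z : ι → E) (M N : Matrix ι ι k) :
    quadratic (fun c => Fintype.linearCombination k Y (N c)) Z M = quadratic Y Z (Nᵀ * M) := by
  simp only [quadratic_apply, Fintype.linearCombination_apply, Finset.sum_mul, Finset.smul_sum,
    smul_mul_assoc, smul_smul, mul_apply, transpose_apply, Finset.sum_smul, mul_comm (M _ _)]
  rw [Finset.sum_comm]
  conv_rhs => rw [Finset.sum_comm]
  exact Finset.sum_congr rfl fun b _ => Finset.sum_comm

lemma quadratic_linear_right (Y Z : ι → E) (M N : Matrix ι ι k) :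
    quadratic Y (fun c => Fintype.linearCombination k Z (N c)) M = quadratic Y Z (M * N) := by
  simp only [quadratic_apply, Fintype.linearCombination_apply, Finset.mul_sum, Finset.smul_sum,
    mul_smul_comm, smul_smul, mul_apply, Finset.sum_smul]
  exact Finset.sum_congr rfl fun a _ => Finset.sum_comm

lemma quadratic_scalar_left (u : ι → k) (Z : ι → E) (M : Matrix ι ι k) :
    quadratic (fun a => u a • 1) Z M = Fintype.linearCombination k Z (u ᵥ* M) := by
  simp only [quadratic_apply, Fintype.linearCombination_apply, smul_mul_assoc, one_mul, smul_smul,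
    vecMul, dotProduct, Finset.sum_smul]
  rw [Finset.sum_comm]
  simp only [mul_comm]

lemma quadratic_scalar_right (Y : ι → E) (u : ι → k) (M : Matrix ι ι k) :
    quadratic Y (fun a => u a • 1) M = Fintype.linearCombination k Y (M *ᵥ u) := by
  simp only [quadratic_apply, Fintype.linearCombination_apply, mul_smul_comm, mul_one, smul_smul,
    mulVec, dotProduct, Finset.sum_smul]

variable {p : ι → ZMod 2} [DecidableEq ι] {e e' : ZMod 2} {M : Matrix ι ι k} {V : E}
  {Y Z y z : ι → E}

lemma superBracket_quadratic_right (hM : IsHomogeneous p e M)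
    (hY : ∀ a, superBracket (koszulSign k (e' * p a)) V (Y a) = y a)
    (hZ : ∀ a, superBracket (koszulSign k (e' * p a)) V (Z a) = z a) :
    superBracket (koszulSign k (e' * e)) V (quadratic Y Z M)
      = quadratic y Z M
        + quadratic Y z ((diagonal fun a => koszulSign k (e' * p a)) * M) := by
  simp only [quadratic_apply, map_sum, ← Finset.sum_add_distrib, diagonal_mul]
  refine Finset.sum_congr rfl fun a _ => Finset.sum_congr rfl fun b _ => ?_
  rcases hM a b with h | h
  · simp [h]
  · rw [h, mul_add, koszulSign_add, map_smul, superBracket_mul_right, hY, hZ]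
    module

lemma superBracket_quadratic_left (hM : IsHomogeneous p e M)
    (hY : ∀ a, superBracket (koszulSign k (p a * e')) (Y a) V = y a)
    (hZ : ∀ a, superBracket (koszulSign k (p a * e')) (Z a) V = z a) :
    superBracket (koszulSign k (e * e')) (quadratic Y Z M) V
      = quadratic Y z M
        + quadratic y Z (M * diagonal fun b => koszulSign k (p b * e')) := by
  simp only [quadratic_apply, map_sum, LinearMap.sum_apply, ← Finset.sum_add_distrib, mul_diagonal]
  refine Finset.sum_congr rfl fun a _ => Finset.sum_congr rfl fun b _ => ?_
  rcases hM a b with h | h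
  · simp [h]
  · rw [h, add_mul, koszulSign_add, map_smul, LinearMap.smul_apply, superBracket_mul_left, hY, hZ]
    module

end QuadraticForms

/-- The super Weyl relations for variables `X a` and derivations `Y a` of parity `p a`, the latter
scaled so that `[Y a, X a] = h`: for `Y a = ħ ∂_a` this is the Planck constant `h = ħ`. -/
structure SuperWeyl {k E ι : Type*} [CommRing k] [Ring E] [Algebra k E] [DecidableEq ι]
    (p : ι → ZMod 2) (h : k) (X Y : ι → E) : Prop where
  xx : ∀ a b, superBracket (koszulSign k (p a * p b)) (X a) (X b) = 0
  yy : ∀ a b, superBracket (koszulSign k (p a * p b)) (Y a) (Y b) = 0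
  yx : ∀ a b, superBracket (koszulSign k (p a * p b)) (Y a) (X b)
    = (Pi.single a h : ι → k) b • (1 : E)

namespace SuperWeyl

variable {k E ι : Type*} [CommRing k] [Ring E] [Algebra k E] [Fintype ι] [DecidableEq ι]
  {p : ι → ZMod 2} {h : k} {X Y : ι → E} {e e' : ZMod 2} {A B C A' B' C' : Matrix ι ι k}

lemma quadratic_yx (w : SuperWeyl p h X Y) (M : Matrix ι ι k) :
    quadratic Y X M = quadratic X Y (superTranspose p M) + (h * trace M) • (1 : E) := by
  have hyx a b : M a b • (Y a * X b)
      = superTranspose p M b a • (X b * Y a) + ((Pi.single a (h * M a a) : ι → k) b) • (1 : E) := by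
    rw [mul_eq_of_superBracket_eq (w.yx a b), superTranspose_apply, mul_comm (p b), smul_add,
      smul_smul, smul_smul, mul_comm (M a b)]
    rcases eq_or_ne b a with rfl | hab
    · rw [Pi.single_eq_same, Pi.single_eq_same, mul_comm (M b b)]
    · rw [Pi.single_eq_of_ne hab, Pi.single_eq_of_ne hab, mul_zero]
  simp only [quadratic_apply, hyx, Finset.sum_add_distrib, ← Finset.sum_smul,
    Finset.sum_pi_single', Finset.mem_univ, if_true, trace, diag_apply, Finset.mul_sum]
  rw [Finset.sum_comm]

lemma bracket_y_xx (w : SuperWeyl p h X Y) (hA : IsHomogeneous p e A)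
    (sA : superTranspose p A = A) (c : ι) :
    superBracket (koszulSign k (p c * e)) (Y c) (quadratic X X A)
      = Fintype.linearCombination k X (((2 * h) • A) c) := by
  have hAc (a) : koszulSign k (p c * p a) * A a c = A c a := congrFun₂ sA c a
  rw [superBracket_quadratic_right hA (w.yx c) (w.yx c), quadratic_scalar_left,
    quadratic_scalar_right, ← map_add]
  congr 1
  ext a
  simp only [single_vecMul, mulVec_single, Pi.add_apply, Pi.smul_apply, row_apply, col_apply,
    diagonal_mul, hAc, op_smul_eq_smul, smul_eq_mul, Matrix.smul_apply]
  ring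

lemma bracket_y_xy (w : SuperWeyl p h X Y) (hB : IsHomogeneous p e B) (c : ι) :
    superBracket (koszulSign k (p c * e)) (Y c) (quadratic X Y B)
      = Fintype.linearCombination k Y ((h • B) c) := by
  rw [superBracket_quadratic_right (z := 0) hB (w.yx c) (w.yy c), quadratic_scalar_left,
    quadratic_zero_right, add_zero, single_vecMul]
  rfl

lemma bracket_y_yy (w : SuperWeyl p h X Y) (hC : IsHomogeneous p e C) (c : ι) :
    superBracket (koszulSign k (p c * e)) (Y c) (quadratic Y Y C) = 0 := by
  rw [superBracket_quadratic_right (y := 0) (z := 0) hC (w.yy c) (w.yy c), quadratic_zero_left,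
    quadratic_zero_right, add_zero]

lemma bracket_xx_x (w : SuperWeyl p h X Y) (hA : IsHomogeneous p e A) (c : ι) :
    superBracket (koszulSign k (e * p c)) (quadratic X X A) (X c) = 0 := by
  rw [superBracket_quadratic_left (y := 0) (z := 0) hA (w.xx · c) (w.xx · c), quadratic_zero_left,
    quadratic_zero_right, add_zero]

lemma bracket_xy_x (w : SuperWeyl p h X Y) (hB : IsHomogeneous p e B) (c : ι) :
    superBracket (koszulSign k (e * p c)) (quadratic X Y B) (X c)
      = Fintype.linearCombination k X ((h • Bᵀ) c) := by
  have yx (a) : superBracket (koszulSign k (p a * p c)) (Y a) (X c)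
      = (Pi.single c h : ι → k) a • (1 : E) := by rw [w.yx, Pi.single_comm]
  rw [superBracket_quadratic_left (y := 0) hB (w.xx · c) yx, quadratic_scalar_right,
    quadratic_zero_left, add_zero, mulVec_single, op_smul_eq_smul]
  rfl

lemma bracket_xy_y (w : SuperWeyl p h X Y) (hB : IsHomogeneous p e B) (c : ι) :
    superBracket (koszulSign k (e * p c)) (quadratic X Y B) (Y c)
      = Fintype.linearCombination k Y
          ((-(h • ((diagonal fun a => koszulSign k (e * p a)) * B))) c) := by
  rw [superBracket_koszulSign_swap, bracket_y_xy w hB, ← map_smul, ← map_neg]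
  congr 1
  ext a
  simp [mul_left_comm, mul_comm e]

lemma bracket_xx_xx (w : SuperWeyl p h X Y) (hA : IsHomogeneous p e A)
    (hA' : IsHomogeneous p e' A') :
    superBracket (koszulSign k (e * e')) (quadratic X X A) (quadratic X X A') = 0 := by
  rw [superBracket_quadratic_right (y := 0) (z := 0) hA' (w.bracket_xx_x hA) (w.bracket_xx_x hA),
    quadratic_zero_left, quadratic_zero_right, add_zero]

lemma bracket_yy_yy (w : SuperWeyl p h X Y) (hC : IsHomogeneous p e C)
    (hC' : IsHomogeneous p e' C') :
    superBracket (koszulSign k (e * e')) (quadratic Y Y C) (quadratic Y Y C') = 0 := by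
  rw [superBracket_quadratic_left (y := 0) (z := 0) hC (w.bracket_y_yy hC') (w.bracket_y_yy hC'),
    quadratic_zero_left, quadratic_zero_right, add_zero]

lemma bracket_xy_xx (w : SuperWeyl p h X Y) (hB : IsHomogeneous p e B)
    (hA : IsHomogeneous p e' A) (sA : superTranspose p A = A) :
    superBracket (koszulSign k (e * e')) (quadratic X Y B) (quadratic X X A)
      = h • quadratic X X (B * A + superTranspose p (B * A)) := by
  rw [superBracket_quadratic_right hA (w.bracket_xy_x hB) (w.bracket_xy_x hB),
    quadratic_linear_left, quadratic_linear_right, superTranspose_mul_of_isHomogeneous_left hB sA,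
    ← map_add, ← map_smul]
  congr 1
  simp [smul_add]

lemma bracket_yy_xy (w : SuperWeyl p h X Y) (hC : IsHomogeneous p e C)
    (sC : superTranspose p C = C) (hB : IsHomogeneous p e' B) :
    superBracket (koszulSign k (e * e')) (quadratic Y Y C) (quadratic X Y B)
      = h • quadratic Y Y (C * B + superTranspose p (C * B)) := by
  rw [superBracket_quadratic_left hC (w.bracket_y_xy hB) (w.bracket_y_xy hB),
    quadratic_linear_left, quadratic_linear_right, superTranspose_mul_of_isHomogeneous_right sC hB,
    ← map_add, ← map_smul]
  congr 1
  simp [smul_add, mul_assoc]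

lemma bracket_yy_xx (w : SuperWeyl p h X Y) (hC : IsHomogeneous p e C)
    (sC : superTranspose p C = C) (hA : IsHomogeneous p e' A) (sA : superTranspose p A = A) :
    superBracket (koszulSign k (e * e')) (quadratic Y Y C) (quadratic X X A)
      = (4 * h) • quadratic X Y (superTranspose p (C * A))
        + (2 * h ^ 2 * trace (C * A)) • (1 : E) := by
  rw [superBracket_quadratic_left hC (w.bracket_y_xx hA sA) (w.bracket_y_xx hA sA),
    quadratic_linear_left, quadratic_linear_right, w.quadratic_yx]
  simp only [transpose_smul, Matrix.smul_mul, Matrix.mul_smul, map_smul]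
  rw [← Matrix.mul_assoc, ← superTranspose_mul_of_isHomogeneous_right sC hA, trace_smul,
    smul_eq_mul]
  module

lemma bracket_xy_xy (w : SuperWeyl p h X Y) (hB : IsHomogeneous p e B)
    (hB' : IsHomogeneous p e' B') :
    superBracket (koszulSign k (e * e')) (quadratic X Y B) (quadratic X Y B')
      = h • quadratic X Y (B * B' - koszulSign k (e * e') • (B' * B)) := by
  rw [superBracket_quadratic_right hB' (w.bracket_xy_x hB) (w.bracket_xy_y hB),
    quadratic_linear_left, quadratic_linear_right, ← map_add, ← map_smul, mul_neg, Matrix.mul_smul,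
    ← Matrix.mul_assoc, diagonal_koszulSign_mul_mul_diagonal hB', Matrix.smul_mul, transpose_smul,
    transpose_transpose, Matrix.smul_mul, smul_sub, sub_eq_add_neg]

end SuperWeyl

/-- The coefficients `(xx, xy, yy, const)` of the inhomogeneous quadratic element
`∑ xx a b • X a X b + ∑ xy a b • X a Y b + ∑ yy a b • Y a Y b + h const`. In terms of the tensors of
a quantum Airy structure `xx = A / 2`, `xy = B`, `yy = C / 2` and `const = D`. -/
abbrev QuadraticData (ι k : Type*) :=
  Matrix ι ι k × Matrix ι ι k × Matrix ι ι k × k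

namespace QuadraticData

section Algebra

variable {k ι : Type*} [CommRing k]

/-- The coefficients of the products `X a X b`. -/
abbrev xx (T : QuadraticData ι k) : Matrix ι ι k := T.1

/-- The coefficients of the products `X a Y b`. -/
abbrev xy (T : QuadraticData ι k) : Matrix ι ι k := T.2.1

/-- The coefficients of the products `Y a Y b`. -/
abbrev yy (T : QuadraticData ι k) : Matrix ι ι k := T.2.2.1

/-- The constant term, up to the factor `h`. -/
abbrev const (T : QuadraticData ι k) : k := T.2.2.2

/-- The quadratic element with these coefficients is homogeneous of parity `e`, and its coefficients
are normalised by supersymmetry. -/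
structure HasParity (p : ι → ZMod 2) (e : ZMod 2) (T : QuadraticData ι k) : Prop where
  xx : IsHomogeneous p e T.xx
  xy : IsHomogeneous p e T.xy
  yy : IsHomogeneous p e T.yy
  const : T.const = 0 ∨ e = 0
  xx_symm : superTranspose p T.xx = T.xx
  yy_symm : superTranspose p T.yy = T.yy

variable {p : ι → ZMod 2} {e : ZMod 2} {T : QuadraticData ι k} {E : Type*} [Ring E] [Algebra k E]

lemma HasParity.superBracket_const_left (hT : T.HasParity p e) (e' : ZMod 2) (t : k) (P : E) :
    superBracket (koszulSign k (e * e')) ((t * T.const) • (1 : E)) P = 0 := by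
  rcases hT.const with h | rfl
  · simp [h]
  · simp [superBracket_apply]

lemma HasParity.superBracket_const_right (hT : T.HasParity p e) (e' : ZMod 2) (t : k) (P : E) :
    superBracket (koszulSign k (e' * e)) P ((t * T.const) • (1 : E)) = 0 := by
  rw [superBracket_koszulSign_swap, hT.superBracket_const_left, smul_zero, neg_zero]

variable [Fintype ι]

/-- The contractions of the derivations in `T` with the variables in `T'`: the contribution of the
ordered product `T T'` to the bracket of the corresponding quadratic elements. -/
def contract (p : ι → ZMod 2) (T T' : QuadraticData ι k) : QuadraticData ι k :=
  (T.xy * T'.xx + superTranspose p (T.xy * T'.xx),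
    T.xy * T'.xy + (4 : k) • superTranspose p (T.yy * T'.xx),
    T.yy * T'.xy + superTranspose p (T.yy * T'.xy),
    2 * trace (T.yy * T'.xx))

end Algebra

variable {k E ι : Type*} [CommRing k] [Ring E] [Algebra k E] [Fintype ι] (X Y : ι → E) (h : k)

/-- The quadratic element of an algebra with prescribed coefficients. The constant term carries the
factor `h` that appears in the operators of a quantum Airy structure. -/
def toAlgebra : QuadraticData ι k →ₗ[k] E :=
  (quadratic X X).coprod ((quadratic X Y).coprod
    ((quadratic Y Y).coprod (LinearMap.toSpanSingleton k E (h • 1))))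

lemma toAlgebra_apply (T : QuadraticData ι k) :
    toAlgebra X Y h T = quadratic X X T.xx + quadratic X Y T.xy + quadratic Y Y T.yy
      + (h * T.const) • (1 : E) := by
  simp only [toAlgebra, LinearMap.coprod_apply, LinearMap.toSpanSingleton_apply]
  module

/-- The operator `L_i` of a quantum Airy structure with coefficients `T`. -/
def airyOperator (i : ι) (T : QuadraticData ι k) : E := Y i - toAlgebra X Y h T

variable {X Y h} [DecidableEq ι] {p : ι → ZMod 2} {e e' : ZMod 2} {T T' : QuadraticData ι k}

lemma superBracket_y_toAlgebra (w : SuperWeyl p h X Y) (hT : T.HasParity p e) (c : ι) :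
    superBracket (koszulSign k (p c * e)) (Y c) (toAlgebra X Y h T)
      = h • ((2 : k) • Fintype.linearCombination k X (T.xx c)
        + Fintype.linearCombination k Y (T.xy c)) := by
  simp only [toAlgebra_apply, map_add]
  rw [w.bracket_y_xx hT.xx hT.xx_symm, w.bracket_y_xy hT.xy, w.bracket_y_yy hT.yy,
    hT.superBracket_const_right]
  have row (t : k) (M : Matrix ι ι k) (Z : ι → E) :
      Fintype.linearCombination k Z ((t • M) c) = t • Fintype.linearCombination k Z (M c) :=
    (Fintype.linearCombination k Z).map_smul t (M c)
  rw [row, row]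
  module

lemma superBracket_toAlgebra (w : SuperWeyl p h X Y) (hT : T.HasParity p e)
    (hT' : T'.HasParity p e') :
    superBracket (koszulSign k (e * e')) (toAlgebra X Y h T) (toAlgebra X Y h T')
      = h • (toAlgebra X Y h (contract p T T')
        - koszulSign k (e * e') • toAlgebra X Y h (contract p T' T)) := by
  have xx_xy :=
    superBracket_koszulSign_swap (k := k) e' e (quadratic X Y T'.xy) (quadratic X X T.xx)
  have xx_yy :=
    superBracket_koszulSign_swap (k := k) e' e (quadratic Y Y T'.yy) (quadratic X X T.xx)
  have xy_yy :=
    superBracket_koszulSign_swap (k := k) e' e (quadratic Y Y T'.yy) (quadratic X Y T.xy)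
  rw [w.bracket_xy_xx hT'.xy hT.xx hT.xx_symm] at xx_xy
  rw [w.bracket_yy_xx hT'.yy hT'.yy_symm hT.xx hT.xx_symm] at xx_yy
  rw [w.bracket_yy_xy hT'.yy hT'.yy_symm hT.xy] at xy_yy
  simp only [toAlgebra_apply, map_add, LinearMap.add_apply, hT.superBracket_const_left,
    hT'.superBracket_const_right, xx_xy, xx_yy, xy_yy, w.bracket_xx_xx hT.xx hT'.xx,
    w.bracket_xy_xx hT.xy hT'.xx hT'.xx_symm, w.bracket_xy_xy hT.xy hT'.xy,
    w.bracket_yy_xx hT.yy hT.yy_symm hT'.xx hT'.xx_symm,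
    w.bracket_yy_xy hT.yy hT.yy_symm hT'.xy, w.bracket_yy_yy hT.yy hT'.yy]
  simp only [contract, xx, xy, yy, const, map_add, map_sub, map_smul, mul_comm e' e]
  module

lemma superBracket_airyOperator (w : SuperWeyl p h X Y) {i j : ι} (hT : T.HasParity p (p i))
    (hT' : T'.HasParity p (p j)) :
    superBracket (koszulSign k (p i * p j)) (airyOperator X Y h i T) (airyOperator X Y h j T')
      = h • ((2 : k) • Fintype.linearCombination k X (koszulSign k (p i * p j) • T.xx j - T'.xx i)
        + Fintype.linearCombination k Y (koszulSign k (p i * p j) • T.xy j - T'.xy i)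
        + toAlgebra X Y h (contract p T T')
        - koszulSign k (p i * p j) • toAlgebra X Y h (contract p T' T)) := by
  simp only [airyOperator, map_sub, LinearMap.sub_apply]
  rw [w.yy, superBracket_toAlgebra w hT hT', superBracket_y_toAlgebra w hT',
    superBracket_koszulSign_swap (p j), superBracket_y_toAlgebra w hT]
  simp only [map_smul, mul_comm (p j)]
  module

end QuadraticData

/-- A vacuum expectation value `ω P = ⟨0| P |0⟩`: the derivations `Y a` annihilate the vacuum
`|0⟩`, and the variables `X a` annihilate the dual vacuum `⟨0|`. -/
structure IsVacuumState {k E ι : Type*} [CommRing k] [Ring E] [Algebra k E] (X Y : ι → E)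
    (ω : E →ₗ[k] k) : Prop where
  one : ω 1 = 1
  x_mul : ∀ a P, ω (X a * P) = 0
  mul_y : ∀ P a, ω (P * Y a) = 0

namespace IsVacuumState

variable {k E ι : Type*} [CommRing k] [Ring E] [Algebra k E] {X Y : ι → E} {ω : E →ₗ[k] k}

lemma x (hω : IsVacuumState X Y ω) (a : ι) : ω (X a) = 0 := by simpa using hω.x_mul a 1

lemma y (hω : IsVacuumState X Y ω) (a : ι) : ω (Y a) = 0 := by simpa using hω.mul_y 1 a

lemma mul_mul_y (hω : IsVacuumState X Y ω) (P Q : E) (a : ι) : ω (P * (Q * Y a)) = 0 := by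
  rw [← mul_assoc, hω.mul_y]

lemma mul_mul_mul_y (hω : IsVacuumState X Y ω) (P Q S : E) (a : ι) :
    ω (P * (Q * (S * Y a))) = 0 := by
  rw [← mul_assoc, hω.mul_mul_y]

variable [Fintype ι] [DecidableEq ι] {p : ι → ZMod 2} {h : k} {u v : ι → k} {T : QuadraticData ι k}

lemma moments_eq_zero (hω : IsVacuumState X Y ω) (w : SuperWeyl p h X Y)
    (h0 : Fintype.linearCombination k X u + Fintype.linearCombination k Y v
      + QuadraticData.toAlgebra X Y h T = 0) :
    h * T.const = 0 ∧ (∀ a, h * u a = 0) ∧ (∀ a, h * v a = 0)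
      ∧ (∀ a b, h ^ 2 * (T.xx a b + superTranspose p T.xx a b) = 0)
      ∧ (∀ a b, h ^ 2 * T.xy a b = 0)
      ∧ ∀ a b, h ^ 2 * (T.yy a b + superTranspose p T.yy a b) = 0 := by
  obtain ⟨δ, hδ⟩ : ∃ δ : ι → ι → k, ∀ a b, δ a b = (Pi.single a h : ι → k) b :=
    ⟨_, fun _ _ => rfl⟩
  have yx a b : Y a * X b = koszulSign k (p a * p b) • (X b * Y a) + δ a b • 1 := by
    rw [hδ, mul_eq_of_superBracket_eq (w.yx a b)]
  have yx_mul a b P : Y a * (X b * P)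
      = koszulSign k (p a * p b) • (X b * (Y a * P)) + δ a b • P := by
    rw [← mul_assoc, yx, add_mul, smul_mul_assoc, smul_mul_assoc, one_mul, mul_assoc]
  have expectation (P Q : E) : ω (P * (Fintype.linearCombination k X u
      + Fintype.linearCombination k Y v + QuadraticData.toAlgebra X Y h T) * Q) = 0 := by
    rw [h0, mul_zero, zero_mul, map_zero]
  simp only [QuadraticData.toAlgebra_apply, Fintype.linearCombination_apply,
    quadratic_apply] at expectation
  have const := expectation 1 1
  have x a := expectation (Y a) 1
  have y a := expectation 1 (X a)
  have xx a b := expectation (Y b * Y a) 1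
  have xy a b := expectation (Y a) (X b)
  have yy a b := expectation 1 (X b * X a)
  simp only [mul_add, add_mul, Finset.mul_sum, Finset.sum_mul, one_mul, mul_one, map_add, map_sum,
    map_smul, mul_smul_comm, smul_mul_assoc, mul_assoc, yx, yx_mul, hω.one, hω.x, hω.y, hω.x_mul,
    hω.mul_y, hω.mul_mul_y, hω.mul_mul_mul_y, smul_add, add_zero, zero_add, hδ,
    Finset.sum_const_zero, Pi.single_apply, smul_eq_mul, mul_ite, ite_mul, mul_zero, zero_mul,
    Finset.sum_add_distrib, Finset.sum_ite_eq, Finset.sum_ite_eq', Finset.sum_ite_irrel,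
    Finset.mem_univ, if_true] at const x y xx xy yy
  refine ⟨const, fun a => ?_, fun a => ?_, fun a b => ?_, fun a b => ?_, fun a b => ?_⟩
  · linear_combination x a
  · linear_combination y a
  · rw [superTranspose_apply]
    linear_combination xx a b
  · specialize xy a b
    rw [← mul_assoc h, const, zero_mul, ite_self] at xy
    linear_combination xy
  · rw [superTranspose_apply]
    linear_combination yy a b

lemma normalForm_eq_zero_iff [NoZeroDivisors k] (hω : IsVacuumState X Y ω) (w : SuperWeyl p h X Y)
    (hh : h ≠ 0) (h2 : (2 : k) ≠ 0) (hxx : superTranspose p T.xx = T.xx)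
    (hyy : superTranspose p T.yy = T.yy) :
    Fintype.linearCombination k X u + Fintype.linearCombination k Y v
        + QuadraticData.toAlgebra X Y h T = 0
      ↔ u = 0 ∧ v = 0 ∧ T = 0 := by
  refine ⟨fun h0 => ?_, by rintro ⟨rfl, rfl, rfl⟩; simp⟩
  obtain ⟨const, x, y, xx, xy, yy⟩ := hω.moments_eq_zero w h0
  simp only [hxx, hyy, ← two_mul, mul_eq_zero, pow_eq_zero_iff two_ne_zero, hh, h2, false_or]
    at const x y xx xy yy
  exact ⟨funext x, funext y, Prod.ext (Matrix.ext xx) (Prod.ext (Matrix.ext xy)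
    (Prod.ext (Matrix.ext yy) const))⟩

end IsVacuumState

namespace QuadraticData

variable {k ι : Type*} [CommRing k] [Fintype ι]

/-- The common side of the structure equations (BA), (BB−CA), (CB) and (CA−BD) of a quantum Airy
structure with coefficients `T`, the four of them being the components of a `QuadraticData`. The
equations say that exchanging `i` and `j` multiplies it by their Koszul sign. -/
def structureTensor (p : ι → ZMod 2) (T : ι → QuadraticData ι k) (i j : ι) : QuadraticData ι k :=
  contract p (T i) (T j) + koszulSign k (p i * p j) • ∑ l, (T i).xy j l • T l

lemma superTranspose_contract_xx (p : ι → ZMod 2) (T T' : QuadraticData ι k) :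
    superTranspose p (contract p T T').xx = (contract p T T').xx :=
  superTranspose_add_superTranspose p _

lemma superTranspose_contract_yy (p : ι → ZMod 2) (T T' : QuadraticData ι k) :
    superTranspose p (contract p T T').yy = (contract p T T').yy :=
  superTranspose_add_superTranspose p _

lemma contract_add_sum_eq_iff {p : ι → ZMod 2} {T : ι → QuadraticData ι k} {i j : ι} {g : ι → k}
    (hg : g = koszulSign k (p i * p j) • (T i).xy j - (T j).xy i) :
    contract p (T i) (T j) + ∑ l, g l • T l = koszulSign k (p i * p j) • contract p (T j) (T i)
      ↔ structureTensor p T i j = koszulSign k (p i * p j) • structureTensor p T j i := by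
  have sum_g : ∑ l, g l • T l = koszulSign k (p i * p j) • ∑ l, (T i).xy j l • T l
      - ∑ l, (T j).xy i l • T l := by
    simp only [hg, Pi.sub_apply, Pi.smul_apply, sub_smul, Finset.sum_sub_distrib, smul_assoc,
      Finset.smul_sum]
  rw [structureTensor, structureTensor, mul_comm (p j), smul_add, smul_smul, koszulSign_mul_self,
    one_smul, sum_g, ← add_sub_assoc, sub_eq_iff_eq_add]

variable {E : Type*} [Ring E] [Algebra k E] [DecidableEq ι] {p : ι → ZMod 2} {h : k} {X Y : ι → E}
  {ω : E →ₗ[k] k} {T : ι → QuadraticData ι k}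

lemma superBracket_airyOperator_sub (w : SuperWeyl p h X Y) (hT : ∀ i, (T i).HasParity p (p i))
    (i j : ι) (g : ι → k) :
    superBracket (koszulSign k (p i * p j)) (airyOperator X Y h i (T i))
          (airyOperator X Y h j (T j)) - h • ∑ l, g l • airyOperator X Y h l (T l)
      = Fintype.linearCombination k X
          ((h * 2) • (koszulSign k (p i * p j) • (T i).xx j - (T j).xx i))
        + Fintype.linearCombination k Y
          (h • (koszulSign k (p i * p j) • (T i).xy j - (T j).xy i - g))
        + toAlgebra X Y h (h • (contract p (T i) (T j) + ∑ l, g l • T l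
          - koszulSign k (p i * p j) • contract p (T j) (T i))) := by
  have sum_g : ∑ l, g l • airyOperator X Y h l (T l)
      = Fintype.linearCombination k Y g - toAlgebra X Y h (∑ l, g l • T l) := by
    simp only [airyOperator, smul_sub, Finset.sum_sub_distrib, map_sum, map_smul,
      Fintype.linearCombination_apply]
  rw [superBracket_airyOperator w (hT i) (hT j), sum_g]
  simp only [map_add, map_sub, map_smul]
  module

theorem superBracket_airyOperator_eq_iff [IsDomain k] (w : SuperWeyl p h X Y)
    (hω : IsVacuumState X Y ω) (hh : h ≠ 0) (h2 : (2 : k) ≠ 0)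
    (hT : ∀ i, (T i).HasParity p (p i)) (i j : ι) (g : ι → k) :
    superBracket (koszulSign k (p i * p j)) (airyOperator X Y h i (T i))
          (airyOperator X Y h j (T j)) = h • ∑ l, g l • airyOperator X Y h l (T l)
      ↔ (T j).xx i = koszulSign k (p i * p j) • (T i).xx j
        ∧ g = koszulSign k (p i * p j) • (T i).xy j - (T j).xy i
        ∧ structureTensor p T i j = koszulSign k (p i * p j) • structureTensor p T j i := by
  have xx_symm l := (hT l).xx_symm
  have yy_symm l := (hT l).yy_symm
  rw [← sub_eq_zero, superBracket_airyOperator_sub w hT, hω.normalForm_eq_zero_iff w hh h2]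
  · simp only [smul_eq_zero, mul_eq_zero, hh, h2, false_or, sub_eq_zero]
    rw [eq_comm (a := _ • (T i).xx j), eq_comm (b := g)]
    refine and_congr_right fun _ => and_congr_right fun hg => contract_add_sum_eq_iff hg
  · simp only [xx, Prod.smul_fst, Prod.fst_sub, Prod.fst_add, Prod.fst_sum, map_smul, map_add,
      map_sub, map_sum, xx_symm, superTranspose_contract_xx]
  · simp only [yy, Prod.smul_fst, Prod.fst_sub, Prod.fst_add, Prod.fst_sum, Prod.smul_snd,
      Prod.snd_sub, Prod.snd_add, Prod.snd_sum, map_smul, map_add, map_sub, map_sum, yy_symm,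
      superTranspose_contract_yy]

end QuadraticData

namespace QuadraticData

variable {F k ι : Type*} [CommRing F] [CommRing k]

/-- Extension of scalars. -/
def map (φ : F →+* k) : QuadraticData ι F →+ QuadraticData ι k :=
  (φ : F →+ k).mapMatrix.prodMap
    ((φ : F →+ k).mapMatrix.prodMap ((φ : F →+ k).mapMatrix.prodMap (φ : F →+ k)))

variable {φ : F →+* k} {p : ι → ZMod 2} {e : ZMod 2} {T : QuadraticData ι F}

lemma map_apply (φ : F →+* k) (T : QuadraticData ι F) :
    map φ T = (T.xx.map φ, T.xy.map φ, T.yy.map φ, φ T.const) := rfl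

lemma map_injective (hφ : Function.Injective φ) :
    Function.Injective (map φ : QuadraticData ι F → QuadraticData ι k) := by
  rintro ⟨A, B, C, D⟩ ⟨A', B', C', D'⟩ h
  simpa only [map_apply, Prod.mk.injEq, (Matrix.map_injective hφ).eq_iff, hφ.eq_iff] using h

lemma map_smul_ringHom (t : F) (T : QuadraticData ι F) : map φ (t • T) = φ t • map φ T := by
  have smul (M : Matrix ι ι F) : (t • M).map φ = φ t • M.map φ :=
    Matrix.map_smul' φ t M (map_mul φ)
  exact Prod.ext (smul T.xx) (Prod.ext (smul T.xy) (Prod.ext (smul T.yy) (map_mul φ t T.const)))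

lemma HasParity.map (hT : T.HasParity p e) (φ : F →+* k) : (map φ T).HasParity p e where
  xx := hT.xx.map φ
  xy := hT.xy.map φ
  yy := hT.yy.map φ
  const := hT.const.imp_left fun h => (congrArg φ h).trans (map_zero φ)
  xx_symm := (map_superTranspose φ T.xx).symm.trans (congrArg (Matrix.map · φ) hT.xx_symm)
  yy_symm := (map_superTranspose φ T.yy).symm.trans (congrArg (Matrix.map · φ) hT.yy_symm)

variable [Fintype ι]

lemma map_contract (T T' : QuadraticData ι F) :
    map φ (contract p T T') = contract p (map φ T) (map φ T') := by
  simp only [map_apply, contract, xx, xy, yy, const, Matrix.map_add φ (_root_.map_add φ),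
    Matrix.map_mul, map_superTranspose, Matrix.map_smul' φ 4 _ (map_mul φ), map_mul, map_ofNat,
    AddMonoidHom.map_trace φ]

lemma map_structureTensor (T : ι → QuadraticData ι F) (i j : ι) :
    map φ (structureTensor p T i j) = structureTensor p (fun l => map φ (T l)) i j := by
  simp only [structureTensor, _root_.map_add, map_sum, map_contract, map_smul_ringHom,
    map_koszulSign]
  rfl

variable {E : Type*} [Ring E] [Algebra k E] [DecidableEq ι] {h : k} {X Y : ι → E} {ω : E →ₗ[k] k}

theorem superBracket_airyOperator_map_eq_iff [IsDomain k] {T : ι → QuadraticData ι F}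
    (w : SuperWeyl p h X Y) (hω : IsVacuumState X Y ω) (hh : h ≠ 0) (h2 : (2 : k) ≠ 0)
    (hφ : Function.Injective φ) (hT : ∀ i, (T i).HasParity p (p i)) (i j : ι) (g : ι → F) :
    superBracket (koszulSign k (p i * p j)) (airyOperator X Y h i (map φ (T i)))
          (airyOperator X Y h j (map φ (T j)))
        = h • ∑ l, φ (g l) • airyOperator X Y h l (map φ (T l))
      ↔ (T j).xx i = koszulSign F (p i * p j) • (T i).xx j
        ∧ g = koszulSign F (p i * p j) • (T i).xy j - (T j).xy i
        ∧ structureTensor p T i j = koszulSign F (p i * p j) • structureTensor p T j i := by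
  refine (superBracket_airyOperator_eq_iff w hω hh h2 (fun l => (hT l).map φ) i j (φ ∘ g)).trans
    (and_congr ?_ (and_congr ?_ ?_))
  · rw [← map_koszulSign φ, ← hφ.comp_left.eq_iff]
    exact Eq.congr_right (funext fun a => (map_mul φ _ _).symm)
  · rw [← map_koszulSign φ, ← hφ.comp_left.eq_iff]
    refine Eq.congr_right (funext fun a => ?_)
    simp only [map_apply, Function.comp_apply, Pi.sub_apply, Pi.smul_apply, smul_eq_mul, map_sub,
      map_mul]
    rfl
  · rw [← map_structureTensor, ← map_structureTensor, ← map_koszulSign φ, ← map_smul_ringHom,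
      (map_injective hφ).eq_iff]

end QuadraticData

section TensorOperators

variable {k M N ι : Type*} [CommRing k] [AddCommGroup M] [AddCommGroup N] [Module k M] [Module k N]
  {p : ι → ZMod 2}

/-- The operators on `M ⊗ N` given by the operators `f a` on `M` for the even indices `a` and by the
operators `g a` on `N` for the odd ones. -/
def tensorOperator (f : {a // p a = 0} → Module.End k M) (g : {a // p a = 1} → Module.End k N)
    (a : ι) : Module.End k (M ⊗[k] N) :=
  if h : p a = 0 then (f ⟨a, h⟩).rTensor N else (g ⟨a, zmod2_eq_one h⟩).lTensor M

variable {f f' : {a // p a = 0} → Module.End k M} {g g' : {a // p a = 1} → Module.End k N} {a b : ι}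

lemma tensorOperator_of_even (ha : p a = 0) :
    tensorOperator f g a = (f ⟨a, ha⟩).rTensor N := dif_pos ha

lemma tensorOperator_of_odd (ha : p a = 1) :
    tensorOperator f g a = (g ⟨a, ha⟩).lTensor M := dif_neg (ha ▸ one_ne_zero)

lemma superBracket_rTensor_rTensor (s : k) (P Q : Module.End k M) :
    superBracket s (LinearMap.rTensor N P) (LinearMap.rTensor N Q)
      = LinearMap.rTensor N (superBracket s P Q) := by
  simp only [superBracket_apply, LinearMap.rTensor_sub, LinearMap.rTensor_smul,
    LinearMap.rTensor_mul]

lemma superBracket_lTensor_lTensor (s : k) (P Q : Module.End k N) :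
    superBracket s (LinearMap.lTensor M P) (LinearMap.lTensor M Q)
      = LinearMap.lTensor M (superBracket s P Q) := by
  simp only [superBracket_apply, LinearMap.lTensor_sub, LinearMap.lTensor_smul,
    LinearMap.lTensor_mul]

lemma superBracket_rTensor_lTensor (P : Module.End k M) (Q : Module.End k N) :
    superBracket (1 : k) (LinearMap.rTensor N P) (LinearMap.lTensor M Q) = 0 := by
  rw [superBracket_apply, one_smul, sub_eq_zero, Module.End.mul_eq_comp, Module.End.mul_eq_comp,
    LinearMap.rTensor_comp_lTensor, LinearMap.lTensor_comp_rTensor]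

lemma superBracket_lTensor_rTensor (P : Module.End k N) (Q : Module.End k M) :
    superBracket (1 : k) (LinearMap.lTensor M P) (LinearMap.rTensor N Q) = 0 := by
  rw [superBracket_swap (one_mul 1), superBracket_rTensor_lTensor, smul_zero, neg_zero]

lemma superBracket_tensorOperator [DecidableEq ι] {t : k}
    (hf : ∀ a b, superBracket (koszulSign k (0 * 0)) (f a) (f' b) = (Pi.single a t : _ → k) b • 1)
    (hg : ∀ a b, superBracket (koszulSign k (1 * 1)) (g a) (g' b) = (Pi.single a t : _ → k) b • 1)
    (a b : ι) :
    superBracket (koszulSign k (p a * p b)) (tensorOperator f g a) (tensorOperator f' g' b)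
      = (Pi.single a t : ι → k) b • 1 := by
  by_cases ha : p a = 0 <;> by_cases hb : p b = 0
  · rw [ha, hb, tensorOperator_of_even ha, tensorOperator_of_even hb, superBracket_rTensor_rTensor,
      hf, LinearMap.rTensor_smul, Module.End.one_eq_id, LinearMap.rTensor_id]
    simp only [Pi.single_apply, Subtype.mk.injEq]
    rfl
  · have hba : b ≠ a := fun h => hb (h ▸ ha)
    rw [ha, zero_mul, koszulSign_zero, tensorOperator_of_even ha,
      tensorOperator_of_odd (zmod2_eq_one hb), superBracket_rTensor_lTensor,
      Pi.single_eq_of_ne hba, zero_smul]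
  · have hba : b ≠ a := fun h => ha (h ▸ hb)
    rw [hb, mul_zero, koszulSign_zero, tensorOperator_of_odd (zmod2_eq_one ha),
      tensorOperator_of_even hb, superBracket_lTensor_rTensor, Pi.single_eq_of_ne hba, zero_smul]
  · replace ha := zmod2_eq_one ha
    replace hb := zmod2_eq_one hb
    rw [ha, hb, tensorOperator_of_odd ha, tensorOperator_of_odd hb, superBracket_lTensor_lTensor,
      hg, LinearMap.lTensor_smul, Module.End.one_eq_id, LinearMap.lTensor_id]
    simp only [Pi.single_apply, Subtype.mk.injEq]
    rfl

lemma SuperWeyl.tensorOperator [DecidableEq ι] {t : k} (w : SuperWeyl (fun _ => 0) t f f')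
    (w' : SuperWeyl (fun _ => 1) t g g') :
    SuperWeyl p t (tensorOperator f g) (tensorOperator f' g') where
  xx a b := by
    simpa using superBracket_tensorOperator (t := 0) (f := f) (f' := f) (g := g) (g' := g)
      (fun a b => (w.xx a b).trans (by simp)) (fun a b => (w'.xx a b).trans (by simp)) a b
  yy a b := by
    simpa using superBracket_tensorOperator (t := 0) (f := f') (f' := f') (g := g') (g' := g')
      (fun a b => (w.yy a b).trans (by simp)) (fun a b => (w'.yy a b).trans (by simp)) a b
  yx := superBracket_tensorOperator w.yx w'.yx

end TensorOperators

lemma SuperWeyl.smul {k E ι : Type*} [CommRing k] [Ring E] [Algebra k E] [DecidableEq ι]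
    {p : ι → ZMod 2} {X Y : ι → E} (w : SuperWeyl p (1 : k) X Y) (h : k) :
    SuperWeyl p h X (h • Y) where
  xx := w.xx
  yy a b := by simp [w.yy]
  yx a b := by simp [w.yx, Pi.single_apply]

section Vacuum

variable {k M N ι : Type*} [CommRing k] [AddCommGroup M] [AddCommGroup N] [Module k M] [Module k N]

/-- A vacuum vector `v`, annihilated by the derivations `Y a`, and a dual vacuum `φ`, annihilated by
the variables `X a`. -/
structure IsVacuum (X Y : ι → Module.End k M) (v : M) (φ : M →ₗ[k] k) : Prop where
  dual_apply : φ v = 1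
  dual_x : ∀ a u, φ (X a u) = 0
  y_apply : ∀ a, Y a v = 0

lemma IsVacuum.isVacuumState {X Y : ι → Module.End k M} {v : M} {φ : M →ₗ[k] k}
    (hv : IsVacuum X Y v φ) : IsVacuumState X Y (φ ∘ₗ LinearMap.applyₗ v) where
  one := hv.dual_apply
  x_mul a P := hv.dual_x a (P v)
  mul_y P a := by simp [hv.y_apply]

lemma IsVacuum.smul {X Y : ι → Module.End k M} {v : M} {φ : M →ₗ[k] k}
    (hv : IsVacuum X Y v φ) (h : k) : IsVacuum X (h • Y) v φ where
  dual_apply := hv.dual_apply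
  dual_x := hv.dual_x
  y_apply a := by simp [hv.y_apply]

lemma IsVacuum.tensorOperator {p : ι → ZMod 2} {X Y : {a // p a = 0} → Module.End k M}
    {X' Y' : {a // p a = 1} → Module.End k N} {v : M} {v' : N} {φ : M →ₗ[k] k} {φ' : N →ₗ[k] k}
    (hv : IsVacuum X Y v φ) (hv' : IsVacuum X' Y' v' φ') :
    IsVacuum (tensorOperator X X') (tensorOperator Y Y') (v ⊗ₜ v')
      (LinearMap.mul' k k ∘ₗ TensorProduct.map φ φ') where
  dual_apply := by simp [hv.dual_apply, hv'.dual_apply]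
  dual_x a u := by
    induction u using TensorProduct.induction_on with
    | zero => simp
    | add x y hx hy => rw [map_add, map_add, hx, hy, add_zero]
    | tmul x y =>
      by_cases ha : p a = 0
      · simp [tensorOperator_of_even ha, hv.dual_x]
      · simp [tensorOperator_of_odd (zmod2_eq_one ha), hv'.dual_x]
  y_apply a := by
    by_cases ha : p a = 0
    · simp [tensorOperator_of_even ha, hv.y_apply]
    · simp [tensorOperator_of_odd (zmod2_eq_one ha), hv'.y_apply]

end Vacuum

section FockSpaces

variable {k σ : Type*} [CommRing k]

lemma isVacuum_mvPolynomial :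
    IsVacuum (fun a => LinearMap.mulLeft k (MvPolynomial.X a : MvPolynomial σ k))
      (fun a => (MvPolynomial.pderiv a).toLinearMap) 1
      (MvPolynomial.aeval (0 : σ → k)).toLinearMap where
  dual_apply := by simp
  dual_x a u := by simp
  y_apply a := by simp

lemma isVacuum_exteriorAlgebra :
    IsVacuum (fun a : σ => LinearMap.mulLeft k (ExteriorAlgebra.ι k (Finsupp.single a (1 : k))))
      (fun a => CliffordAlgebra.contractLeft (Finsupp.lapply a)) 1
      ExteriorAlgebra.algebraMapInv.toLinearMap where
  dual_apply := by simp
  dual_x a u := by simp [ExteriorAlgebra.algebraMapInv]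
  y_apply a := by simp

lemma commutator_pderiv_pderiv (a b : σ) :
    ⁅(MvPolynomial.pderiv a : Derivation k (MvPolynomial σ k) (MvPolynomial σ k)),
      (MvPolynomial.pderiv b : Derivation k (MvPolynomial σ k) (MvPolynomial σ k))⁆ = 0 := by
  classical
  exact MvPolynomial.derivation_ext fun c => by
    simp [Derivation.commutator_apply, MvPolynomial.pderiv_X, Pi.single_apply, apply_ite]

lemma superBracket_mulLeft_mulLeft {A : Type*} [Ring A] [Algebra k A] (s : k) (a b : A) :
    superBracket s (LinearMap.mulLeft k a) (LinearMap.mulLeft k b)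
      = LinearMap.mulLeft k (superBracket s a b) := by
  ext1 u
  simp [superBracket_apply, sub_mul, mul_assoc]

variable [DecidableEq σ]

lemma superWeyl_mvPolynomial :
    SuperWeyl (fun _ : σ => 0) (1 : k)
      (fun a => LinearMap.mulLeft k (MvPolynomial.X a : MvPolynomial σ k))
      (fun a => (MvPolynomial.pderiv a).toLinearMap) where
  xx a b := by
    rw [superBracket_mulLeft_mulLeft, mul_zero, koszulSign_zero, superBracket_apply, one_smul,
      mul_comm, sub_self, LinearMap.mulLeft_zero_eq_zero]
  yy a b := by
    rw [mul_zero, koszulSign_zero, superBracket_apply, one_smul]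
    exact congrArg Derivation.toLinearMap (commutator_pderiv_pderiv a b)
  yx a b := by
    refine LinearMap.ext fun u => ?_
    rcases eq_or_ne b a with rfl | hba
    · simp [superBracket_apply, mul_comm u]
    · simp [superBracket_apply, mul_comm u, MvPolynomial.pderiv_X_of_ne hba, hba]

lemma superWeyl_exteriorAlgebra :
    SuperWeyl (fun _ : σ => 1) (1 : k)
      (fun a => LinearMap.mulLeft k (ExteriorAlgebra.ι k (Finsupp.single a (1 : k))))
      (fun a => CliffordAlgebra.contractLeft (Finsupp.lapply a)) where
  xx a b := by
    rw [superBracket_mulLeft_mulLeft, mul_one, koszulSign_one, superBracket_apply, neg_one_smul,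
      sub_neg_eq_add, ExteriorAlgebra.ι_add_mul_swap, LinearMap.mulLeft_zero_eq_zero]
  yy a b := by
    rw [mul_one, koszulSign_one, superBracket_apply, neg_one_smul, sub_neg_eq_add]
    exact LinearMap.ext fun u => eq_neg_iff_add_eq_zero.1 (CliffordAlgebra.contractLeft_comm _ _ u)
  yx a b := by
    rw [mul_one, koszulSign_one, superBracket_apply, neg_one_smul, sub_neg_eq_add]
    refine LinearMap.ext fun u =>
      (eq_sub_iff_add_eq.1 (CliffordAlgebra.contractLeft_ι_mul _ _ u)).trans ?_
    rcases eq_or_ne b a with rfl | hba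
    · simp
    · simp [hba]

end FockSpaces

section AiryData

variable {F : Type} [Field F] {d : ℕ} {p : Fin (d + 1) → ZMod 2}
  {A B C : Fin (d + 1) → Fin (d + 1) → Fin (d + 1) → F} {D : Fin (d + 1) → F} {i j : Fin (d + 1)}

/-- The coefficients of the operators `Lop`, extended by zero to the index `0`. -/
def airyData (A B C : Fin (d + 1) → Fin (d + 1) → Fin (d + 1) → F) (D : Fin (d + 1) → F)
    (i : Fin (d + 1)) : QuadraticData (Fin (d + 1)) F :=
  if i = 0 then 0 else ((2 : F)⁻¹ • of (A i), of (B i), (2 : F)⁻¹ • of (C i), D i)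

@[simp] lemma airyData_zero : airyData A B C D 0 = 0 := if_pos rfl

lemma airyData_of_ne_zero (hi : i ≠ 0) :
    airyData A B C D i = ((2 : F)⁻¹ • of (A i), of (B i), (2 : F)⁻¹ • of (C i), D i) := if_neg hi

lemma airyData_hasParity
    (hA0 : ∀ i a b, i ≠ 0 → p i + p a + p b ≠ 0 → A i a b = 0)
    (hB0 : ∀ i a b, i ≠ 0 → p i + p a + p b ≠ 0 → B i a b = 0)
    (hC0 : ∀ i a b, i ≠ 0 → p i + p a + p b ≠ 0 → C i a b = 0)
    (hD0 : ∀ i, i ≠ 0 → p i ≠ 0 → D i = 0)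
    (hAsym : ∀ i a b, i ≠ 0 → A i a b = sg F (p a * p b) * A i b a)
    (hCsym : ∀ i a b, i ≠ 0 → C i a b = sg F (p a * p b) * C i b a) (i : Fin (d + 1)) :
    (airyData A B C D i).HasParity p (p i) := by
  by_cases hi : i = 0
  · subst hi
    rw [airyData_zero]
    exact ⟨fun _ _ => .inl rfl, fun _ _ => .inl rfl, fun _ _ => .inl rfl, .inl rfl, map_zero _,
      map_zero _⟩
  rw [airyData_of_ne_zero hi]
  refine ⟨(isHomogeneous_iff.2 (hA0 i · · hi)).smul _, isHomogeneous_iff.2 (hB0 i · · hi),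
    (isHomogeneous_iff.2 (hC0 i · · hi)).smul _, or_iff_not_imp_right.2 (hD0 i hi), ?_, ?_⟩
  · exact (map_smul _ _ _).trans (congrArg _ (Matrix.ext fun a b => (hAsym i a b hi).symm))
  · exact (map_smul _ _ _).trans (congrArg _ (Matrix.ext fun a b => (hCsym i a b hi).symm))

lemma sum_smul_airyData (v : Fin (d + 1) → F) :
    ∑ l, v l • airyData A B C D l
      = ((2 : F)⁻¹ • of fun a b => ∑ l, if l = 0 then 0 else v l * A l a b,
        of fun a b => ∑ l, if l = 0 then 0 else v l * B l a b,
        (2 : F)⁻¹ • of fun a b => ∑ l, if l = 0 then 0 else v l * C l a b,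
        ∑ l, if l = 0 then 0 else v l * D l) := by
  have smul_airyData l : v l • airyData A B C D l
      = ((2 : F)⁻¹ • of fun a b => if l = 0 then 0 else v l * A l a b,
        of fun a b => if l = 0 then 0 else v l * B l a b,
        (2 : F)⁻¹ • of fun a b => if l = 0 then 0 else v l * C l a b,
        if l = 0 then 0 else v l * D l) := by
    by_cases hl : l = 0
    · simp only [hl, airyData_zero, if_true, smul_zero]
      exact Prod.ext (smul_zero _).symm (Prod.ext rfl (Prod.ext (smul_zero _).symm rfl))
    · simp only [airyData_of_ne_zero hl, hl, if_false, Prod.smul_mk, smul_comm (v l)]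
      rfl
  simp only [smul_airyData]
  refine Prod.ext ?_ (Prod.ext ?_ (Prod.ext ?_ ?_))
  · ext; simp [Prod.fst_sum, Matrix.sum_apply, Finset.mul_sum]
  · ext; simp [Prod.fst_sum, Prod.snd_sum, Matrix.sum_apply]
  · ext; simp [Prod.fst_sum, Prod.snd_sum, Matrix.sum_apply, Finset.mul_sum]
  · simp [Prod.snd_sum]

open QuadraticData in
lemma contract_airyData [NeZero (2 : F)] (hi : i ≠ 0) (hj : j ≠ 0) :
    contract p (airyData A B C D i) (airyData A B C D j)
      = ((2 : F)⁻¹ • of fun a b =>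
          ∑ c, (B i a c * A j c b + sg F (p a * p b) * (B i b c * A j c a)),
        of fun a b => ∑ c, (B i a c * B j c b + sg F (p a * p b) * (C i b c * A j c a)),
        (2 : F)⁻¹ • of fun a b =>
          ∑ c, (C i a c * B j c b + sg F (p a * p b) * (C i b c * B j c a)),
        (2 : F)⁻¹ * ∑ a, ∑ b, C i b a * A j a b) := by
  have h4 : (4 : F) * (2 : F)⁻¹ * (2 : F)⁻¹ = 1 := by
    rw [show (4 : F) = 2 * 2 by norm_num]; field_simp
  have h2 : (2 : F) * (2 : F)⁻¹ = 1 := mul_inv_cancel₀ two_ne_zero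
  rw [airyData_of_ne_zero hi, airyData_of_ne_zero hj]
  simp only [contract, xx, xy, yy, Matrix.mul_smul, Matrix.smul_mul, map_smul, trace_smul,
    smul_smul, h4, one_smul, ← smul_add, smul_eq_mul, ← mul_assoc, h2, one_mul, sg]
  refine Prod.ext ?_ (Prod.ext ?_ (Prod.ext ?_ ?_))
  · ext
    simp [superTranspose_apply, Matrix.mul_apply, koszulSign, Finset.sum_add_distrib,
      Finset.mul_sum]
  · ext
    simp [superTranspose_apply, Matrix.mul_apply, koszulSign, Finset.sum_add_distrib,
      Finset.mul_sum]
  · ext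
    simp [superTranspose_apply, Matrix.mul_apply, koszulSign, Finset.sum_add_distrib,
      Finset.mul_sum]
  · simp only [trace, diag_apply, Matrix.mul_apply, of_apply]
    rw [Finset.sum_comm]

lemma structureTensor_airyData [NeZero (2 : F)] (hi : i ≠ 0) (hj : j ≠ 0) :
    QuadraticData.structureTensor p (airyData A B C D) i j
      = ((2 : F)⁻¹ • of (lhsBA F d p A B i j), of (lhsBBCA F d p A B C i j),
        (2 : F)⁻¹ • of (lhsCB F d p B C i j), lhsCABD F d p A B C D i j) := by
  rw [QuadraticData.structureTensor, contract_airyData hi hj, airyData_of_ne_zero hi,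
    sum_smul_airyData, Prod.smul_mk, Prod.smul_mk, Prod.smul_mk, smul_comm _ (2 : F)⁻¹,
    smul_comm _ (2 : F)⁻¹, Prod.mk_add_mk, Prod.mk_add_mk, Prod.mk_add_mk, ← smul_add, ← smul_add]
  rfl

end AiryData

section SuperSpaceOperators

variable {F : Type} [Field F] {d : ℕ} {p : Fin (d + 1) → ZMod 2}
  {A B C : Fin (d + 1) → Fin (d + 1) → Fin (d + 1) → F} {D : Fin (d + 1) → F} {i j : Fin (d + 1)}

/-- The additive group structure on the carrier `S`, with the additive monoid structure that
`TensorProduct` provides: instance search does not find that the two agree, and hence does not find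
the ring structure on the endomorphisms of `S`. -/
@[reducible] def superSpaceAddCommGroup : AddCommGroup (SuperSpace F d p) :=
  { (inferInstance : AddCommMonoid (SuperSpace F d p)),
    (inferInstance : AddCommGroup (SuperSpace F d p)) with }

attribute [local instance] superSpaceAddCommGroup

variable (F p) in
/-- `xop` as a family of linear maps. -/
def xLinear : Fin (d + 1) → Module.End (R F) (SuperSpace F d p) :=
  tensorOperator (fun a => LinearMap.mulLeft (R F) (MvPolynomial.X a))
    (fun a => LinearMap.mulLeft (R F) (ExteriorAlgebra.ι (R F) (Finsupp.single a 1)))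

variable (F p) in
/-- `dop` as a family of linear maps. -/
def dLinear : Fin (d + 1) → Module.End (R F) (SuperSpace F d p) :=
  tensorOperator (fun a => (MvPolynomial.pderiv a).toLinearMap)
    (fun a => CliffordAlgebra.contractLeft (Finsupp.lapply a))

lemma coe_xLinear (a : Fin (d + 1)) : ⇑(xLinear F p a) = xop F d p a := by
  rw [xLinear, tensorOperator, xop]; split_ifs <;> rfl

lemma coe_dLinear (a : Fin (d + 1)) : ⇑(dLinear F p a) = dop F d p a := by
  rw [dLinear, tensorOperator, dop]; split_ifs <;> rfl

variable (F p) in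
lemma superWeyl_superSpace (h : R F) : SuperWeyl p h (xLinear F p) (h • dLinear F p) :=
  (superWeyl_mvPolynomial.tensorOperator superWeyl_exteriorAlgebra).smul h

variable (F p) in
lemma exists_isVacuumState_superSpace (h : R F) :
    ∃ ω : Module.End (R F) (SuperSpace F d p) →ₗ[R F] R F,
      IsVacuumState (xLinear F p) (h • dLinear F p) ω :=
  ⟨_, ((isVacuum_mvPolynomial.tensorOperator isVacuum_exteriorAlgebra).smul h).isVacuumState⟩

open QuadraticData

variable (p A B C D) in
/-- `Lop` as a linear map, for nonzero indices. -/
def lopLinear (i : Fin (d + 1)) : Module.End (R F) (SuperSpace F d p) :=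
  airyOperator (xLinear F p) (hb F • dLinear F p) (hb F) i (map Polynomial.C (airyData A B C D i))

lemma coe_lopLinear (hi : i ≠ 0) : ⇑(lopLinear p A B C D i) = Lop F d p A B C D i := by
  ext v
  simp only [lopLinear, airyOperator, toAlgebra_apply, airyData_of_ne_zero hi,
    QuadraticData.map_apply, quadratic_apply, Lop, cs, ← coe_xLinear, ← coe_dLinear, xx, xy, yy,
    const, Matrix.map_apply, Matrix.smul_apply, of_apply, LinearMap.sub_apply, LinearMap.add_apply,
    LinearMap.sum_apply, LinearMap.smul_apply, Module.End.mul_apply, Module.End.one_apply,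
    Pi.smul_apply, map_smul, smul_smul, smul_eq_mul, mul_comm (hb F), sub_sub, add_assoc, sq]

lemma superBracket_lopLinear_eq_iff (hi : i ≠ 0) (hj : j ≠ 0) (g : Fin (d + 1) → F) :
    superBracket (koszulSign (R F) (p i * p j)) (lopLinear p A B C D i) (lopLinear p A B C D j)
        = hb F • ∑ l, Polynomial.C (if l = 0 then 0 else g l) • lopLinear p A B C D l
      ↔ ∀ v : SuperSpace F d p,
        Lop F d p A B C D i (Lop F d p A B C D j v)
            - sgR F (p i * p j) • Lop F d p A B C D j (Lop F d p A B C D i v)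
          = ∑ l, if l = 0 then 0 else (hb F * cs F (g l)) • Lop F d p A B C D l v := by
  rw [LinearMap.ext_iff]
  refine forall_congr' fun v => Eq.congr ?_ ?_
  · rw [← coe_lopLinear hi, ← coe_lopLinear hj]
    rfl
  · rw [LinearMap.smul_apply, LinearMap.sum_apply, Finset.smul_sum]
    refine Finset.sum_congr rfl fun l _ => ?_
    by_cases hl : l = 0
    · simp [hl]
    · rw [if_neg hl, if_neg hl, ← coe_lopLinear hl, mul_smul]
      rfl

end SuperSpaceOperators

section AiryConstraints

variable {F : Type} [Field F] {d : ℕ} {p : Fin (d + 1) → ZMod 2}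
  {A B C : Fin (d + 1) → Fin (d + 1) → Fin (d + 1) → F} {D : Fin (d + 1) → F}
  {g : Fin (d + 1) → F} {i j : Fin (d + 1)}

/-- The structure equations of a quantum super Airy structure for a fixed pair `i`, `j` of nonzero
indices, where `g k` stands for the structure constant `f_{ij}^k`. -/
structure AiryConstraints (p : Fin (d + 1) → ZMod 2)
    (A B C : Fin (d + 1) → Fin (d + 1) → Fin (d + 1) → F) (D g : Fin (d + 1) → F)
    (i j : Fin (d + 1)) : Prop where
  A_symm : ∀ a, A j i a = sg F (p i * p j) * A i j a
  f_eq : ∀ k, k ≠ 0 → g k = sg F (p i * p j) * B i j k - B j i k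
  B_zero : sg F (p i * p j) * B i j 0 = B j i 0
  BA : ∀ a b, lhsBA F d p A B i j a b = sg F (p i * p j) * lhsBA F d p A B j i a b
  BBCA : ∀ a b, lhsBBCA F d p A B C i j a b = sg F (p i * p j) * lhsBBCA F d p A B C j i a b
  CB : ∀ a b, lhsCB F d p B C i j a b = sg F (p i * p j) * lhsCB F d p B C j i a b
  CABD : lhsCABD F d p A B C D i j = sg F (p i * p j) * lhsCABD F d p A B C D j i

lemma airyConstraints_iff :
    AiryConstraints p A B C D g i j
      ↔ A j i = sg F (p i * p j) • A i j
        ∧ (fun k => if k = 0 then 0 else g k) = sg F (p i * p j) • B i j - B j i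
        ∧ lhsBA F d p A B i j = sg F (p i * p j) • lhsBA F d p A B j i
        ∧ lhsBBCA F d p A B C i j = sg F (p i * p j) • lhsBBCA F d p A B C j i
        ∧ lhsCB F d p B C i j = sg F (p i * p j) • lhsCB F d p B C j i
        ∧ lhsCABD F d p A B C D i j = sg F (p i * p j) * lhsCABD F d p A B C D j i := by
  constructor
  · rintro ⟨A_symm, f_eq, B_zero, BA, BBCA, CB, CABD⟩
    refine ⟨funext A_symm, funext fun k => ?_, funext₂ BA, funext₂ BBCA, funext₂ CB, CABD⟩
    rcases eq_or_ne k 0 with rfl | hk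
    · exact (if_pos rfl).trans (sub_eq_zero.2 B_zero).symm
    · exact (if_neg hk).trans (f_eq k hk)
  · rintro ⟨A_symm, f_eq, BA, BBCA, CB, CABD⟩
    exact ⟨congrFun A_symm, fun k hk => (if_neg hk).symm.trans (congrFun f_eq k),
      sub_eq_zero.1 ((congrFun f_eq 0).symm.trans (if_pos rfl)), congrFun₂ BA, congrFun₂ BBCA,
      congrFun₂ CB, CABD⟩

attribute [local instance] superSpaceAddCommGroup

theorem superBracket_lopLinear_eq_iff_airyConstraints [NeZero (2 : F)]
    (hT : ∀ i, (airyData A B C D i).HasParity p (p i)) (hi : i ≠ 0) (hj : j ≠ 0) :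
    superBracket (koszulSign (R F) (p i * p j)) (lopLinear p A B C D i) (lopLinear p A B C D j)
        = hb F • ∑ l, Polynomial.C (if l = 0 then 0 else g l) • lopLinear p A B C D l
      ↔ AiryConstraints p A B C D g i j := by
  obtain ⟨ω, hω⟩ := exists_isVacuumState_superSpace F p (hb F)
  have h2 : (2 : R F) ≠ 0 :=
    map_ofNat (Polynomial.C (R := F)) 2 ▸ Polynomial.C_ne_zero.2 (two_ne_zero (α := F))
  have inv_two_smul_inj {V : Type} [AddCommGroup V] [Module F V] (s : F) (u v : V) :
      (2 : F)⁻¹ • u = s • (2 : F)⁻¹ • v ↔ u = s • v := by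
    rw [smul_comm s, smul_right_inj (inv_ne_zero two_ne_zero)]
  rw [airyConstraints_iff]
  refine (QuadraticData.superBracket_airyOperator_map_eq_iff (superWeyl_superSpace F p (hb F)) hω
    Polynomial.X_ne_zero h2 Polynomial.C_injective hT i j _).trans ?_
  rw [structureTensor_airyData hi hj, structureTensor_airyData hj hi, airyData_of_ne_zero hi,
    airyData_of_ne_zero hj]
  refine and_congr (inv_two_smul_inj _ _ _) (and_congr_right fun _ => ?_)
  rw [Prod.smul_mk, Prod.smul_mk, Prod.smul_mk, Prod.mk.injEq, Prod.mk.injEq, Prod.mk.injEq,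
    inv_two_smul_inj, inv_two_smul_inj]
  rfl

end AiryConstraints

theorem statement1_general {F : Type} [Field F] [NeZero (2 : F)] {d : ℕ}
    {p : Fin (d + 1) → ZMod 2}
    (A B C : Fin (d + 1) → Fin (d + 1) → Fin (d + 1) → F) (D : Fin (d + 1) → F)
    (f : Fin (d + 1) → Fin (d + 1) → Fin (d + 1) → F)
    (hA0 : ∀ i a b, i ≠ 0 → p i + p a + p b ≠ 0 → A i a b = 0)
    (hB0 : ∀ i a b, i ≠ 0 → p i + p a + p b ≠ 0 → B i a b = 0)
    (hC0 : ∀ i a b, i ≠ 0 → p i + p a + p b ≠ 0 → C i a b = 0)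
    (hD0 : ∀ i, i ≠ 0 → p i ≠ 0 → D i = 0)
    (hAsym : ∀ i a b, i ≠ 0 → A i a b = sg F (p a * p b) * A i b a)
    (hCsym : ∀ i a b, i ≠ 0 → C i a b = sg F (p a * p b) * C i b a) :
    (∀ i j : Fin (d + 1), i ≠ 0 → j ≠ 0 → ∀ v : SuperSpace F d p,
        Lop F d p A B C D i (Lop F d p A B C D j v)
            - sgR F (p i * p j) • Lop F d p A B C D j (Lop F d p A B C D i v)
          = ∑ k : Fin (d + 1),
              (if k = 0 then 0 else (hb F * cs F (f i j k)) • Lop F d p A B C D k v))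
      ↔
    ((∀ i j a, i ≠ 0 → j ≠ 0 → A j i a = sg F (p i * p j) * A i j a) ∧
     (∀ i j k, i ≠ 0 → j ≠ 0 → k ≠ 0 →
        f i j k = sg F (p i * p j) * B i j k - B j i k) ∧
     (∀ i j, i ≠ 0 → j ≠ 0 → sg F (p i * p j) * B i j 0 = B j i 0) ∧
     (∀ i j a b, i ≠ 0 → j ≠ 0 →
        lhsBA F d p A B i j a b = sg F (p i * p j) * lhsBA F d p A B j i a b) ∧
     (∀ i j a b, i ≠ 0 → j ≠ 0 →
        lhsBBCA F d p A B C i j a b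
          = sg F (p i * p j) * lhsBBCA F d p A B C j i a b) ∧
     (∀ i j a b, i ≠ 0 → j ≠ 0 →
        lhsCB F d p B C i j a b = sg F (p i * p j) * lhsCB F d p B C j i a b) ∧
     (∀ i j, i ≠ 0 → j ≠ 0 →
        lhsCABD F d p A B C D i j = sg F (p i * p j) * lhsCABD F d p A B C D j i)) := by
  have hT := airyData_hasParity hA0 hB0 hC0 hD0 hAsym hCsym
  have bracket_iff i j (hi : i ≠ 0) (hj : j ≠ 0) :=
    (superBracket_lopLinear_eq_iff hi hj (f i j)).symm.trans
      (superBracket_lopLinear_eq_iff_airyConstraints hT hi hj)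
  constructor
  · intro h
    have airy i j hi hj := (bracket_iff i j hi hj).1 (h i j hi hj)
    exact ⟨fun i j a hi hj => (airy i j hi hj).A_symm a, fun i j k hi hj => (airy i j hi hj).f_eq k,
      fun i j hi hj => (airy i j hi hj).B_zero, fun i j a b hi hj => (airy i j hi hj).BA a b,
      fun i j a b hi hj => (airy i j hi hj).BBCA a b, fun i j a b hi hj => (airy i j hi hj).CB a b,
      fun i j hi hj => (airy i j hi hj).CABD⟩
  · rintro ⟨A_symm, f_eq, B_zero, BA, BBCA, CB, CABD⟩ i j hi hj
    exact (bracket_iff i j hi hj).2 ⟨(A_symm i j · hi hj), (f_eq i j · hi hj), B_zero i j hi hj,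
      (BA i j · · hi hj), (BBCA i j · · hi hj), (CB i j · · hi hj), CABD i j hi hj⟩

/-- Under the evenness and symmetry assumptions on the tensors
`A, B, C, D`, the supercommutation relations `[L_i, L_j] = ℏ Σ_{k∈I} f_{ij}^k L_k`
(`i, j ∈ I`) hold if and only if the constraints (A), (f), (BA), (BB−CA), (CB) and
(CA−BD) of a quadratic super quantum Airy structure are all satisfied. -/
theorem statement1 (hd : 1 ≤ d) (hp0 : p 0 = 1)
    (A B C : Fin (d + 1) → Fin (d + 1) → Fin (d + 1) → K) (D : Fin (d + 1) → K)
    (f : Fin (d + 1) → Fin (d + 1) → Fin (d + 1) → K)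
    (hA0 : ∀ i a b, i ≠ 0 → p i + p a + p b ≠ 0 → A i a b = 0)
    (hB0 : ∀ i a b, i ≠ 0 → p i + p a + p b ≠ 0 → B i a b = 0)
    (hC0 : ∀ i a b, i ≠ 0 → p i + p a + p b ≠ 0 → C i a b = 0)
    (hD0 : ∀ i, i ≠ 0 → p i ≠ 0 → D i = 0)
    (hAsym : ∀ i a b, i ≠ 0 → A i a b = sg K (p a * p b) * A i b a)
    (hCsym : ∀ i a b, i ≠ 0 → C i a b = sg K (p a * p b) * C i b a) :
    (∀ i j : Fin (d + 1), i ≠ 0 → j ≠ 0 → ∀ v : SuperSpace K d p,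
        Lop K d p A B C D i (Lop K d p A B C D j v)
            - sgR K (p i * p j) • Lop K d p A B C D j (Lop K d p A B C D i v)
          = ∑ k : Fin (d + 1),
              (if k = 0 then 0 else (hb K * cs K (f i j k)) • Lop K d p A B C D k v))
      ↔
    ((∀ i j a, i ≠ 0 → j ≠ 0 → A j i a = sg K (p i * p j) * A i j a) ∧
     (∀ i j k, i ≠ 0 → j ≠ 0 → k ≠ 0 →
        f i j k = sg K (p i * p j) * B i j k - B j i k) ∧
     (∀ i j, i ≠ 0 → j ≠ 0 → sg K (p i * p j) * B i j 0 = B j i 0) ∧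
     (∀ i j a b, i ≠ 0 → j ≠ 0 →
        lhsBA K d p A B i j a b = sg K (p i * p j) * lhsBA K d p A B j i a b) ∧
     (∀ i j a b, i ≠ 0 → j ≠ 0 →
        lhsBBCA K d p A B C i j a b
          = sg K (p i * p j) * lhsBBCA K d p A B C j i a b) ∧
     (∀ i j a b, i ≠ 0 → j ≠ 0 →
        lhsCB K d p B C i j a b = sg K (p i * p j) * lhsCB K d p B C j i a b) ∧
     (∀ i j, i ≠ 0 → j ≠ 0 →
        lhsCABD K d p A B C D i j = sg K (p i * p j) * lhsCABD K d p A B C D j i)) := by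
  exact statement1_general A B C D f hA0 hB0 hC0 hD0 hAsym hCsym

end
end

section
/- Fix an integer N ≥ −1 and scalars D_1, …, D_{N+1} ∈ K. For each integer i ≥ 1 define the R-linear endomorphism of P (the polynomial ring over R = K[ℏ] in the variables x^1, x^2, x^3, …): H_i = ℏ ∂_i + (ℏ²/2) Σ_{k,l ≥ 1, k+l = i+N−1} ∂_k ∂_l + ℏ Σ_{m ≥ 1, m+i+N−1 ≥ 1} m x^m ∂_{m+i+N−1} + ℏ D_i [i ≤ N+1]. (These are the operators of the momentum-zero untwisted free-boson representation, i.e. with bosonic zero mode b_0 = 0; they coincide with the quantum Airy structure produced by the 'topological recursion without branched covers' on the spectral curve Σ = P¹, ω_{0,1} = −dz/z^N, ω_{0,2} = dz_1 dz_2/(z_1−z_2)², ω_{1,1} = −Σ_{k=1}^{N+1} D_k dz/z^{k+1}.) Then for all integers i, j ≥ 1: [H_i, H_j] = ℏ (i − j) H_{i+j+N−1}. -/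
/-!
Statement 5: the momentum-zero untwisted free-boson operators
`H_i = ℏ ∂_i + (ℏ²/2) Σ_{k,l≥1, k+l=i+N−1} ∂_k ∂_l
       + ℏ Σ_{m≥1, m+i+N−1≥1} m x^m ∂_{m+i+N−1} + ℏ D_i [i ≤ N+1]`
acting on `P = K[ℏ][x¹, x², x³, …]` satisfy `[H_i, H_j] = ℏ (i−j) H_{i+j+N−1}`.
-/

noncomputable section

open MvPolynomial

/-- The carrier: polynomials over `R = K[ℏ]` in variables `x^1, x^2, x^3, …`. -/
abbrev BosonSpace (K : Type) [Field K] := MvPolynomial ℕ+ (Polynomial K)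

variable (K : Type) [Field K] [CharZero K]

/-- `ℏ`, as an element of `P` (acting by multiplication). -/
def hbar : BosonSpace K := MvPolynomial.C Polynomial.X

/-- `∂_a` for `a ∈ ℤ`, with the convention that it vanishes for `a < 1`. -/
def Dop (a : ℤ) (p : BosonSpace K) : BosonSpace K :=
  if h : 1 ≤ a then MvPolynomial.pderiv (⟨a.toNat, by omega⟩ : ℕ+) p else 0

/-- Multiplication by `x^a` for `a ∈ ℤ`, with the convention that it vanishes for `a < 1`. -/
def Xop (a : ℤ) (p : BosonSpace K) : BosonSpace K :=
  if h : 1 ≤ a then (MvPolynomial.X (⟨a.toNat, by omega⟩ : ℕ+) : BosonSpace K) * p else 0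

/-- The operator
`H_i = ℏ ∂_i + (ℏ²/2) Σ_{k,l≥1, k+l=i+N−1} ∂_k ∂_l
       + ℏ Σ_{m≥1, m+i+N−1≥1} m x^m ∂_{m+i+N−1} + ℏ D_i [i ≤ N+1]`. -/
def Hop (N : ℤ) (D : ℤ → K) (i : ℤ) (p : BosonSpace K) : BosonSpace K :=
  hbar K * Dop K i p
    + MvPolynomial.C (Polynomial.C ((2 : K)⁻¹)) * hbar K ^ 2 *
        (∑ᶠ k : ℤ, Dop K k (Dop K (i + N - 1 - k) p))
    + hbar K * (∑ᶠ m : ℤ, (m : BosonSpace K) * Xop K m (Dop K (m + i + N - 1) p))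
    + (if i ≤ N + 1 then hbar K * MvPolynomial.C (Polynomial.C (D i)) * p else 0)

/-!
Write `H_i = A_i + ℏ E_{i+N-1}`, where `A_i` has constant coefficients and
`E_n = ∑_m m x^m ∂_{m+n}` is a derivation. The `A_i` commute with each other. Derivations are
determined on the variables, which gives the Witt relation `[E_n, E_m] = (n - m) E_{n+m}` for
`n, m ≥ -1`, and `[∂_a, E_n] = max(a, 0) ∂_{a+n}`. The mixed commutators
`[A_i, E_{j+N-1}] + [E_{i+N-1}, A_j]` then add up to `(i - j) A_{i+j+N-1}`; here the scalar term
of `A_{i+j+N-1}` contributes nothing, since it is zero unless `i = j = 1`, when `i - j = 0`.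
-/

section Coordinates

variable {R : Type*} [CommRing R]

theorem derivation_apply_eq_sum_vars {σ A : Type*} [AddCommGroup A] [Module R A]
    [Module (MvPolynomial σ R) A] [IsScalarTower R (MvPolynomial σ R) A]
    (D : Derivation R (MvPolynomial σ R) A) (p : MvPolynomial σ R) :
    D p = ∑ i ∈ p.vars, pderiv i p • D (X i) := by
  have eval_sum (q : MvPolynomial σ R) :
      (∑ i ∈ p.vars, (LinearMap.toSpanSingleton _ A (D (X i))).compDer (pderiv i)) q =
        ∑ i ∈ p.vars, pderiv i q • D (X i) := by
    rw [← Derivation.coeFnAddMonoidHom_apply, map_sum, Finset.sum_apply]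
    rfl
  rw [← eval_sum]
  refine derivation_eq_of_forall_mem_vars fun j hj => ?_
  rw [eval_sum, Finset.sum_eq_single_of_mem j hj fun i _ hij => by
    rw [pderiv_X_of_ne hij.symm, zero_smul], pderiv_X_self, one_smul]

variable (R)

/-- The partial derivative `∂_a`, extended by zero to all integers `a ≤ 0`. -/
def pderivInt (a : ℤ) : Derivation R (MvPolynomial ℕ+ R) (MvPolynomial ℕ+ R) :=
  if h : 1 ≤ a then pderiv ⟨a.toNat, by omega⟩ else 0

/-- The variable `x^a`, extended by zero to all integers `a ≤ 0`. -/
def intX (a : ℤ) : MvPolynomial ℕ+ R :=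
  if h : 1 ≤ a then X ⟨a.toNat, by omega⟩ else 0

/-- The derivation `E_n = ∑_m m x^m ∂_{m+n}`, given by its values `E_n x^b = (b - n) x^{b-n}`
on the variables. -/
def wittDerivation (n : ℤ) : Derivation R (MvPolynomial ℕ+ R) (MvPolynomial ℕ+ R) :=
  mkDerivation R fun b : ℕ+ => ((b : ℤ) - n) • intX R ((b : ℤ) - n)

theorem pderivInt_coe (b : ℕ+) : pderivInt R b = pderiv b :=
  dif_pos (mod_cast b.pos)

theorem intX_coe (b : ℕ+) : intX R b = X b :=
  dif_pos (mod_cast b.pos)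

variable {R}

theorem pderivInt_of_nonpos {a : ℤ} (ha : a ≤ 0) : pderivInt R a = 0 :=
  dif_neg (by omega)

theorem intX_of_nonpos {a : ℤ} (ha : a ≤ 0) : intX R a = 0 :=
  dif_neg (by omega)

theorem pderivInt_intX (a c : ℤ) :
    pderivInt R a (intX R c) = if a = c ∧ 0 < c then 1 else 0 := by
  rcases le_or_gt c 0 with hc | hc
  · rw [intX_of_nonpos hc, map_zero, if_neg (by omega)]
  rcases le_or_gt a 0 with ha | ha
  · rw [pderivInt_of_nonpos ha, if_neg (by omega), Derivation.zero_apply]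
  lift a to ℕ+ using ha
  lift c to ℕ+ using hc
  simp [pderivInt_coe, intX_coe, pderiv_X, Pi.single_apply, eq_comm]

theorem pderivInt_X (a : ℤ) (b : ℕ+) : pderivInt R a (X b) = if a = b then 1 else 0 := by
  simp [← intX_coe, pderivInt_intX]

theorem wittDerivation_X (n : ℤ) (b : ℕ+) :
    wittDerivation R n (X b) = ((b : ℤ) - n) • intX R ((b : ℤ) - n) :=
  mkDerivation_X R _ b

theorem wittDerivation_intX (n c : ℤ) :
    wittDerivation R n (intX R c) = if 0 < c then (c - n) • intX R (c - n) else 0 := by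
  split_ifs with hc
  · lift c to ℕ+ using hc
    rw [intX_coe, wittDerivation_X]
  · rw [intX_of_nonpos (by omega), map_zero]

theorem finsum_intX_mul_pderivInt (n : ℤ) (p : MvPolynomial ℕ+ R) :
    ∑ᶠ m : ℤ, (m : MvPolynomial ℕ+ R) * (intX R m * pderivInt R (m + n) p) =
      wittDerivation R n p := by
  have coe_injective : Function.Injective fun b : ℕ+ => (b : ℤ) := fun _ _ h => by simpa using h
  have support_subset : (Function.support fun a : ℤ =>
      ((a - n : ℤ) : MvPolynomial ℕ+ R) * (intX R (a - n) * pderivInt R a p)) ⊆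
        (p.vars.image fun b : ℕ+ => (b : ℤ) : Finset ℤ) := by
    intro a ha
    have pderiv_ne : pderivInt R a p ≠ 0 := fun h => ha (by simp [h])
    have a_pos : 0 < a := not_le.mp fun h => pderiv_ne (by simp [pderivInt_of_nonpos h])
    lift a to ℕ+ using a_pos
    rw [pderivInt_coe] at pderiv_ne
    simpa using not_imp_comm.mp pderiv_eq_zero_of_notMem_vars pderiv_ne
  rw [← finsum_comp_equiv (Equiv.subRight n)]
  simp only [Equiv.subRight_apply, sub_add_cancel]
  rw [finsum_eq_sum_of_support_subset _ support_subset, Finset.sum_image coe_injective.injOn,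
    derivation_apply_eq_sum_vars]
  refine Finset.sum_congr rfl fun b _ => ?_
  rw [pderivInt_coe, wittDerivation_X, zsmul_eq_mul, smul_eq_mul]
  ring

theorem pderivInt_lie_pderivInt (a b : ℤ) : ⁅pderivInt R a, pderivInt R b⁆ = 0 := by
  refine derivation_ext fun i => ?_
  simp only [Derivation.commutator_apply, pderivInt_X, apply_ite, Derivation.map_one_eq_zero,
    map_zero, ite_self, sub_zero, Derivation.zero_apply]

theorem pderivInt_lie_wittDerivation (a n : ℤ) :
    ⁅pderivInt R a, wittDerivation R n⁆ = max a 0 • pderivInt R (a + n) := by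
  refine derivation_ext fun b => ?_
  have lie_apply_X : ⁅pderivInt R a, wittDerivation R n⁆ (X b) =
      ((b : ℤ) - n) • if a = b - n ∧ 0 < (b : ℤ) - n then 1 else 0 := by
    have witt_pderiv_X : wittDerivation R n (pderivInt R a (X b)) = 0 := by
      rw [pderivInt_X]
      split_ifs <;> simp
    rw [Derivation.commutator_apply, witt_pderiv_X, sub_zero, wittDerivation_X, map_zsmul,
      pderivInt_intX]
  rw [lie_apply_X, Derivation.smul_apply, pderivInt_X]
  rcases eq_or_ne (a + n) b with h | h
  · rw [if_pos h, ← h, add_sub_cancel_right]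
    rcases le_or_gt a 0 with ha | ha
    · rw [if_neg (by omega), max_eq_right ha, smul_zero, zero_smul]
    · rw [if_pos ⟨rfl, ha⟩, max_eq_left ha.le]
  · rw [if_neg (by omega), if_neg h, smul_zero, smul_zero]

theorem wittDerivation_wittDerivation_X (m : ℤ) {n : ℤ} (hn : -1 ≤ n) (b : ℕ+) :
    wittDerivation R n (wittDerivation R m (X b)) =
      (((b : ℤ) - m) * (b - (n + m))) • intX R (b - (n + m)) := by
  rw [wittDerivation_X, map_zsmul, wittDerivation_intX, sub_sub, add_comm m n, mul_smul]
  split_ifs with h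
  · rfl
  · obtain h0 | h0 : (b : ℤ) - m = 0 ∨ (b : ℤ) - (n + m) ≤ 0 := by omega
    · rw [h0, zero_smul, zero_smul]
    · rw [intX_of_nonpos h0, smul_zero, smul_zero, smul_zero]

theorem wittDerivation_lie_wittDerivation {n m : ℤ} (hn : -1 ≤ n) (hm : -1 ≤ m) :
    ⁅wittDerivation R n, wittDerivation R m⁆ = (n - m) • wittDerivation R (n + m) := by
  refine derivation_ext fun b => ?_
  rw [Derivation.commutator_apply, wittDerivation_wittDerivation_X m hn,
    wittDerivation_wittDerivation_X n hm, Derivation.smul_apply, wittDerivation_X,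
    add_comm m n, smul_smul, ← sub_smul]
  congr 1
  ring

end Coordinates

section Operators

attribute [local instance] LieRing.ofAssociativeRing

variable (R : Type*) [CommRing R]

/-- The endomorphism `∂_a` of the polynomial ring, zero for `a ≤ 0`. -/
def pderivEnd (a : ℤ) : Module.End R (MvPolynomial ℕ+ R) := pderivInt R a

/-- The endomorphism `E_n = ∑_m m x^m ∂_{m+n}` of the polynomial ring. -/
def wittEnd (n : ℤ) : Module.End R (MvPolynomial ℕ+ R) := wittDerivation R n

/-- The second-order operator `∑ c_k ∂_k ∂_l` over the pairs `k, l ≥ 1` with `k + l = n`; the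
weights `c` are integers, as they arise from commutators with `wittEnd`. -/
def antidiagLaplacian (c : ℤ → ℤ) (n : ℤ) : Module.End R (MvPolynomial ℕ+ R) :=
  ∑ k ∈ Finset.Ioo 0 n, c k • (pderivEnd R k * pderivEnd R (n - k))

variable {R}

theorem pderivEnd_of_nonpos {a : ℤ} (ha : a ≤ 0) : pderivEnd R a = 0 := by
  rw [pderivEnd, pderivInt_of_nonpos ha, Derivation.coe_zero_linearMap]

theorem commute_pderivEnd (a b : ℤ) : Commute (pderivEnd R a) (pderivEnd R b) := by
  rw [commute_iff_lie_eq, pderivEnd, pderivEnd, ← Derivation.commutator_coe_linear_map,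
    pderivInt_lie_pderivInt, Derivation.coe_zero_linearMap]

theorem pderivEnd_lie_wittEnd (a n : ℤ) :
    ⁅pderivEnd R a, wittEnd R n⁆ = max a 0 • pderivEnd R (a + n) := by
  rw [pderivEnd, wittEnd, ← Derivation.commutator_coe_linear_map, pderivInt_lie_wittDerivation,
    Derivation.coe_smul_linearMap, pderivEnd]

theorem wittEnd_lie_wittEnd {n m : ℤ} (hn : -1 ≤ n) (hm : -1 ≤ m) :
    ⁅wittEnd R n, wittEnd R m⁆ = (n - m) • wittEnd R (n + m) := by
  rw [wittEnd, wittEnd, ← Derivation.commutator_coe_linear_map,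
    wittDerivation_lie_wittDerivation hn hm, Derivation.coe_smul_linearMap, wittEnd]

theorem commute_pderivEnd_antidiagLaplacian (a : ℤ) (c : ℤ → ℤ) (n : ℤ) :
    Commute (pderivEnd R a) (antidiagLaplacian R c n) :=
  Commute.sum_right _ _ _ fun _ _ =>
    ((commute_pderivEnd _ _).mul_right (commute_pderivEnd _ _)).smul_right _

theorem antidiagLaplacian_add (c c' : ℤ → ℤ) (n : ℤ) :
    antidiagLaplacian R (c + c') n = antidiagLaplacian R c n + antidiagLaplacian R c' n := by
  simp only [antidiagLaplacian, Pi.add_apply, add_smul, Finset.sum_add_distrib]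

theorem antidiagLaplacian_sub (c c' : ℤ → ℤ) (n : ℤ) :
    antidiagLaplacian R (c - c') n = antidiagLaplacian R c n - antidiagLaplacian R c' n := by
  simp only [antidiagLaplacian, Pi.sub_apply, sub_smul, Finset.sum_sub_distrib]

theorem antidiagLaplacian_smul (z : ℤ) (c : ℤ → ℤ) (n : ℤ) :
    antidiagLaplacian R (z • c) n = z • antidiagLaplacian R c n := by
  simp only [antidiagLaplacian, Pi.smul_apply, smul_assoc, Finset.smul_sum]

theorem pderivEnd_mul_pderivEnd_of_notMem_Ioo {k n : ℤ} (hk : k ∉ Finset.Ioo 0 n) :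
    pderivEnd R k * pderivEnd R (n - k) = 0 := by
  obtain hk | hk : k ≤ 0 ∨ n - k ≤ 0 := by grind
  · rw [pderivEnd_of_nonpos hk, zero_mul]
  · rw [pderivEnd_of_nonpos hk, mul_zero]

theorem antidiagLaplacian_eq_sum {c : ℤ → ℤ} {n : ℤ} {s : Finset ℤ}
    (hc : ∀ k ∈ Finset.Ioo 0 n, k ∉ s → c k = 0) :
    antidiagLaplacian R c n = ∑ k ∈ s, c k • (pderivEnd R k * pderivEnd R (n - k)) :=
  Finset.sum_congr_of_eq_on_inter
    (fun k hk hks => by rw [hc k hk hks, zero_smul])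
    (fun k _ hk => by rw [pderivEnd_mul_pderivEnd_of_notMem_Ioo hk, smul_zero])
    fun _ _ _ => rfl

theorem finsum_pderivInt_pderivInt (n : ℤ) (p : MvPolynomial ℕ+ R) :
    ∑ᶠ k : ℤ, pderivInt R k (pderivInt R (n - k) p) = antidiagLaplacian R 1 n p := by
  have support_subset : (Function.support fun k => pderivInt R k (pderivInt R (n - k) p)) ⊆
      (Finset.Ioo 0 n : Finset ℤ) := fun k hk => by
    contrapose! hk
    exact Function.notMem_support.mpr
      (LinearMap.congr_fun (pderivEnd_mul_pderivEnd_of_notMem_Ioo hk) p)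
  rw [finsum_eq_sum_of_support_subset _ support_subset, antidiagLaplacian, LinearMap.sum_apply]
  exact Finset.sum_congr rfl fun k _ => by rw [Pi.one_apply, one_smul]; rfl

theorem antidiagLaplacian_one_lie_wittEnd (n m : ℤ) :
    ⁅antidiagLaplacian R 1 n, wittEnd R m⁆ =
      antidiagLaplacian R ((fun k => max (k - m) 0) + fun k => max (n - k) 0) (n + m) := by
  have leibniz (k : ℤ) : ⁅pderivEnd R k * pderivEnd R (n - k), wittEnd R m⁆ =
      max k 0 • (pderivEnd R (k + m) * pderivEnd R (n - k)) +
        max (n - k) 0 • (pderivEnd R k * pderivEnd R (n - k + m)) := by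
    rw [← smul_mul_assoc, ← mul_smul_comm, ← pderivEnd_lie_wittEnd, ← pderivEnd_lie_wittEnd]
    simp only [Ring.lie_def, sub_mul, mul_sub, mul_assoc]
    abel
  have shifted_weight : antidiagLaplacian R (fun k => max (k - m) 0) (n + m) =
      ∑ k ∈ Finset.Ioo 0 n, max k 0 • (pderivEnd R (k + m) * pderivEnd R (n - k)) := by
    rw [antidiagLaplacian_eq_sum (s := (Finset.Ioo 0 n).map (addRightEmbedding m)),
      Finset.sum_map]
    · simp only [addRightEmbedding_apply, add_sub_cancel_right, add_sub_add_right_eq_sub]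
    · intro k hk hks
      have : k - m ∉ Finset.Ioo 0 n := fun h =>
        hks (Finset.mem_map.mpr ⟨k - m, h, sub_add_cancel k m⟩)
      grind
  have complementary_weight : antidiagLaplacian R (fun k => max (n - k) 0) (n + m) =
      ∑ k ∈ Finset.Ioo 0 n, max (n - k) 0 • (pderivEnd R k * pderivEnd R (n - k + m)) := by
    rw [antidiagLaplacian_eq_sum (s := Finset.Ioo 0 n) (by grind)]
    simp only [sub_add_eq_add_sub]
  rw [antidiagLaplacian_add, shifted_weight, complementary_weight, antidiagLaplacian, sum_lie,
    ← Finset.sum_add_distrib]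
  exact Finset.sum_congr rfl fun k _ => by rw [Pi.one_apply, one_smul, leibniz]

/- On the antidiagonal `k + l = n + m` the four truncated weights recombine into
`(k - m) + (n - k) = n - m`, because `max a 0 - max (-a) 0 = a`. -/
theorem antidiagLaplacian_lie_wittEnd_add_wittEnd_lie_antidiagLaplacian (n m : ℤ) :
    ⁅antidiagLaplacian R 1 n, wittEnd R m⁆ + ⁅wittEnd R n, antidiagLaplacian R 1 m⁆ =
      (n - m) • antidiagLaplacian R 1 (n + m) := by
  rw [← lie_skew (wittEnd R n), ← sub_eq_add_neg, antidiagLaplacian_one_lie_wittEnd,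
    antidiagLaplacian_one_lie_wittEnd, add_comm m n, ← antidiagLaplacian_sub,
    ← antidiagLaplacian_smul]
  congr 1
  funext k
  simp only [Pi.sub_apply, Pi.add_apply, Pi.smul_apply, Pi.one_apply, smul_eq_mul]
  omega

/-- The constant-coefficient part `α ∂_i + β ∑_{k + l = i + N - 1} ∂_k ∂_l + d_i` of a
free-boson operator; the operators `H_i` of the quantum Airy structure have `α = ℏ` and
`β = ℏ² / 2`. -/
def constCoeffOp (α β : R) (N : ℤ) (d : ℤ → R) (i : ℤ) : Module.End R (MvPolynomial ℕ+ R) :=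
  α • pderivEnd R i + β • antidiagLaplacian R 1 (i + N - 1) + d i • 1

/-- The free-boson operator `α ∂_i + β ∑_{k + l = i + N - 1} ∂_k ∂_l + d_i + γ E_{i + N - 1}`;
the operators `H_i` of the quantum Airy structure have `α = γ = ℏ` and `β = ℏ² / 2`. -/
def freeBosonOp (α β γ : R) (N : ℤ) (d : ℤ → R) (i : ℤ) : Module.End R (MvPolynomial ℕ+ R) :=
  constCoeffOp α β N d i + γ • wittEnd R (i + N - 1)

theorem commute_constCoeffOp (α β : R) (N : ℤ) (d : ℤ → R) (i j : ℤ) :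
    Commute (constCoeffOp α β N d i) (constCoeffOp α β N d j) := by
  have commute_pderiv (k : ℤ) : Commute (pderivEnd R k) (constCoeffOp α β N d j) :=
    (((commute_pderivEnd k j).smul_right α).add_right
      ((commute_pderivEnd_antidiagLaplacian k 1 _).smul_right β)).add_right
        ((Commute.one_right _).smul_right _)
  have commute_laplacian (n : ℤ) :
      Commute (antidiagLaplacian R 1 n) (constCoeffOp α β N d j) :=
    Commute.sum_left _ _ _ fun k _ =>
      ((commute_pderiv k).mul_left (commute_pderiv (n - k))).smul_left _
  exact (((commute_pderiv i).smul_left α).add_left ((commute_laplacian _).smul_left β)).add_left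
    ((Commute.one_left _).smul_left _)

theorem pderivEnd_lie_wittEnd_add_wittEnd_lie_pderivEnd {i j : ℤ} (hi : 0 ≤ i) (hj : 0 ≤ j)
    (n : ℤ) :
    ⁅pderivEnd R i, wittEnd R (j + n)⁆ + ⁅wittEnd R (i + n), pderivEnd R j⁆ =
      (i - j) • pderivEnd R (i + j + n) := by
  rw [← lie_skew (wittEnd R (i + n)), pderivEnd_lie_wittEnd, pderivEnd_lie_wittEnd,
    max_eq_left hi, max_eq_left hj, ← add_assoc, add_left_comm j i n, ← add_assoc, sub_smul,
    sub_eq_add_neg]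

theorem constCoeffOp_lie_wittEnd_add_wittEnd_lie_constCoeffOp (α β : R) {N : ℤ} {d : ℤ → R}
    (hd : ∀ k, N + 1 < k → d k = 0) {i j : ℤ} (hi : 1 ≤ i) (hj : 1 ≤ j) :
    ⁅constCoeffOp α β N d i, wittEnd R (j + N - 1)⁆ +
        ⁅wittEnd R (i + N - 1), constCoeffOp α β N d j⁆ =
      (i - j) • constCoeffOp α β N d (i + j + N - 1) := by
  have lie_pderiv := pderivEnd_lie_wittEnd_add_wittEnd_lie_pderivEnd (R := R)
    (zero_le_one.trans hi) (zero_le_one.trans hj) (N - 1)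
  have lie_laplacian := antidiagLaplacian_lie_wittEnd_add_wittEnd_lie_antidiagLaplacian
    (R := R) (i + N - 1) (j + N - 1)
  have smul_scalar_eq_zero : (i - j) • d (i + j + N - 1) = 0 := by
    rcases eq_or_ne i j with rfl | hij
    · rw [sub_self, zero_smul]
    · rw [hd _ (by omega), smul_zero]
  rw [← add_sub_assoc, ← add_sub_assoc, ← add_sub_assoc] at lie_pderiv
  rw [show i + N - 1 + (j + N - 1) = i + j + N - 1 + N - 1 by ring,
    show i + N - 1 - (j + N - 1) = i - j by ring] at lie_laplacian
  calc
    _ = α • (⁅pderivEnd R i, wittEnd R (j + N - 1)⁆ + ⁅wittEnd R (i + N - 1), pderivEnd R j⁆) +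
        β • (⁅antidiagLaplacian R 1 (i + N - 1), wittEnd R (j + N - 1)⁆ +
          ⁅wittEnd R (i + N - 1), antidiagLaplacian R 1 (j + N - 1)⁆) := by
      simp only [constCoeffOp, Ring.lie_def, add_mul, mul_add, smul_mul_assoc, mul_smul_comm,
        one_mul, mul_one, smul_add, smul_sub]
      abel
    _ = (i - j) • constCoeffOp α β N d (i + j + N - 1) := by
      rw [lie_pderiv, lie_laplacian, constCoeffOp, smul_add, smul_add, ← smul_assoc (i - j) (d _),
        smul_scalar_eq_zero, zero_smul, add_zero, smul_comm α, smul_comm β]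

theorem statement5_general (α β γ : R) {N : ℤ} {d : ℤ → R} (hd : ∀ k, N + 1 < k → d k = 0)
    {i j : ℤ} (hi : 1 ≤ i) (hj : 1 ≤ j) (hiN : -N ≤ i) (hjN : -N ≤ j) :
    ⁅freeBosonOp α β γ N d i, freeBosonOp α β γ N d j⁆ =
      (γ * ((i - j : ℤ) : R)) • freeBosonOp α β γ N d (i + j + N - 1) := by
  have lie_witt : ⁅wittEnd R (i + N - 1), wittEnd R (j + N - 1)⁆ =
      (i - j) • wittEnd R (i + j + N - 1 + N - 1) := by
    rw [wittEnd_lie_wittEnd (by omega) (by omega),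
      show i + N - 1 + (j + N - 1) = i + j + N - 1 + N - 1 by ring,
      show i + N - 1 - (j + N - 1) = i - j by ring]
  rw [mul_smul, Int.cast_smul_eq_zsmul]
  calc
    _ = γ • (⁅constCoeffOp α β N d i, wittEnd R (j + N - 1)⁆ +
          ⁅wittEnd R (i + N - 1), constCoeffOp α β N d j⁆ +
          γ • ⁅wittEnd R (i + N - 1), wittEnd R (j + N - 1)⁆) := by
      simp only [freeBosonOp, Ring.lie_def, add_mul, mul_add, smul_mul_assoc, mul_smul_comm,
        smul_add, smul_sub, (commute_constCoeffOp α β N d i j).eq]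
      abel
    _ = γ • (i - j) • freeBosonOp α β γ N d (i + j + N - 1) := by
      rw [constCoeffOp_lie_wittEnd_add_wittEnd_lie_constCoeffOp α β hd hi hj, lie_witt,
        freeBosonOp, smul_add (i - j), smul_comm γ (i - j)]

theorem Dop_eq_pderivInt {F : Type} [Field F] (a : ℤ) (p : BosonSpace F) :
    Dop F a p = pderivInt (Polynomial F) a p := by
  by_cases h : 1 ≤ a
  · rw [pderivInt, dif_pos h]
    exact dif_pos h
  · rw [pderivInt, dif_neg h]
    exact dif_neg h

theorem Xop_eq_intX_mul {F : Type} [Field F] (a : ℤ) (p : BosonSpace F) :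
    Xop F a p = intX (Polynomial F) a * p := by
  by_cases h : 1 ≤ a <;> simp [Xop, intX, h]

theorem Hop_eq_freeBosonOp {F : Type} [Field F] (N : ℤ) (D : ℤ → F) (i : ℤ) (p : BosonSpace F) :
    Hop F N D i p = freeBosonOp Polynomial.X (Polynomial.C 2⁻¹ * Polynomial.X ^ 2) Polynomial.X N
      (fun k => if k ≤ N + 1 then Polynomial.X * Polynomial.C (D k) else 0) i p := by
  have shift (m : ℤ) : m + i + N - 1 = m + (i + N - 1) := by ring
  simp only [Hop, Dop_eq_pderivInt, Xop_eq_intX_mul, shift, finsum_pderivInt_pderivInt,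
    finsum_intX_mul_pderivInt]
  simp only [freeBosonOp, constCoeffOp, LinearMap.add_apply, LinearMap.smul_apply, smul_eq_C_mul,
    map_mul, map_pow, Module.End.one_apply, pderivEnd, wittEnd, Derivation.coeFn_coe]
  split_ifs <;> simp only [hbar, map_mul, map_zero, zero_mul] <;> ring

end Operators

/-- For every integer `N ≥ −1` and scalars `D_1, …, D_{N+1}`, the operators
`H_i`, `i ≥ 1` (the quantum Airy structure of the topological recursion without branched
covers on the spectral curve `(P¹, −dz/z^N, dz₁dz₂/(z₁−z₂)², −Σ_{k=1}^{N+1} D_k dz/z^{k+1})`),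
satisfy `[H_i, H_j] = ℏ (i − j) H_{i+j+N−1}`. -/
theorem statement5 (N : ℤ) (hN : -1 ≤ N) (D : ℤ → K) :
    ∀ i j : ℤ, 1 ≤ i → 1 ≤ j → ∀ p : BosonSpace K,
      Hop K N D i (Hop K N D j p) - Hop K N D j (Hop K N D i p)
        = hbar K * ((i - j : ℤ) : BosonSpace K) * Hop K N D (i + j + N - 1) p := by
  intro i j hi hj p
  rw [← map_intCast (C : Polynomial K →+* BosonSpace K), hbar, ← map_mul, ← smul_eq_C_mul]
  simp only [Hop_eq_freeBosonOp]
  exact LinearMap.congr_fun (statement5_general _ _ _ (fun _ hk => if_neg hk.not_ge) hi hj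
    (by omega) (by omega)) p

end
end
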